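/- arXiv:2202.04986 — 13 statements merged into one kernel-verified Lean document; each statement's English description precedes it below -/
import Mathlib

section
/- Let h : ℤ → ℝ be a feedback filter, i.e. h_n = 0 for n ≤ 0 and for n > L (for some L ∈ ℕ), and let y : ℕ → ℝ be an input sequence. Define the state sequence v : ℤ → ℝ and the output q : ℕ → {−1,1} of the 1-bit ΣΔ quantizer by v_n = 0 for n < 0 and, for n ≥ 0, q_n = sign((h∗v)_n + y_n) and v_n = (h∗v)_n + y_n − q_n, where (h∗v)_n = Σ_{j=1}^L h_j v_{n−j}. If Σ_{j=1}^L |h_j| + sup_{n∈ℕ} |y_n| ≤ 2, then |v_n| ≤ 1 for all n ∈ ℕ. -/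
/-- The 1-bit sign quantizer: `sgn x = 1` if `x > 0` and `-1` if `x ≤ 0`. -/
noncomputable def sgn (x : ℝ) : ℝ := if 0 < x then 1 else -1

/-- Stability of the one-dimensional 1-bit ΣΔ quantizer: if
`‖h‖₁ + sup_n |y_n| ≤ 2`, then the state variable satisfies `|v_n| ≤ 1` for all `n ∈ ℕ`. -/
theorem stmt_0 (L : ℕ) (h : ℤ → ℝ)
    (hcausal : ∀ n : ℤ, n ≤ 0 → h n = 0)
    (hsupp : ∀ n : ℤ, (L : ℤ) < n → h n = 0)
    (y : ℕ → ℝ) (v : ℤ → ℝ) (q : ℕ → ℝ)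
    (hv_neg : ∀ n : ℤ, n < 0 → v n = 0)
    (hq : ∀ n : ℕ, q n =
      sgn ((∑ j ∈ Finset.Icc (1 : ℤ) (L : ℤ), h j * v ((n : ℤ) - j)) + y n))
    (hv : ∀ n : ℕ, v (n : ℤ) =
      (∑ j ∈ Finset.Icc (1 : ℤ) (L : ℤ), h j * v ((n : ℤ) - j)) + y n - q n)
    (hbound : ∀ n : ℕ, (∑ j ∈ Finset.Icc (1 : ℤ) (L : ℤ), |h j|) + |y n| ≤ 2) :
    ∀ n : ℕ, |v (n : ℤ)| ≤ 1 := by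
  intro n
  induction n using Nat.strong_induction_on with
  | _ n ih =>
    have key : ∀ j ∈ Finset.Icc (1 : ℤ) (L : ℤ), |h j * v ((n : ℤ) - j)| ≤ |h j| := by
      intro j hj
      have hj1 := (Finset.mem_Icc.mp hj).1
      have hb : |v ((n : ℤ) - j)| ≤ 1 := by
        by_cases hneg : (n : ℤ) - j < 0
        · rw [hv_neg _ hneg]
          norm_num
        · have hm := ih ((n : ℤ) - j).toNat (by omega)
          rwa [Int.toNat_of_nonneg (by omega)] at hm
      rw [abs_mul]
      exact mul_le_of_le_one_right (abs_nonneg _) hb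
    have h1 := (Finset.abs_sum_le_sum_abs (fun j => h j * v ((n : ℤ) - j))
      (Finset.Icc (1 : ℤ) (L : ℤ))).trans (Finset.sum_le_sum key)
    have h2 := hbound n
    rw [hv n, hq n]
    set S := ∑ j ∈ Finset.Icc (1 : ℤ) (L : ℤ), h j * v ((n : ℤ) - j) with hS
    have h3 : |S + y n| ≤ 2 := (abs_add_le S (y n)).trans (by linarith)
    obtain ⟨h4, h5⟩ := abs_le.mp h3
    unfold sgn
    split_ifs with hpos <;> rw [abs_le] <;> constructor <;> linarith
end

section
/- Fix p, s, ℓ ∈ ℕ and a weight matrix w = (w_{i,j}), i ∈ {0,…,p}, j ∈ {−s,…,ℓ}, with w_{i,j} ≥ 0, w_{0,j} = 0 for j ≤ 0, and Σ_{i,j} w_{i,j} = 1; let d_{i,j} = (i,j) ∈ ℤ², and for each (i,j) let h^{i,j} : ℤ → ℝ be a feedback filter supported on {1,…,L}. Given an input y : ℕ² → ℝ, define the state v : ℤ² → ℝ and output q : ℕ² → {−1,1} of the weighted ΣΔ quantizer by v_n = 0 for n ∉ ℕ² and, for n ∈ ℕ² processed in raster order (row by row, left to right), q_n = sign(Σ_{i,j}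 w_{i,j} (h^{i,j} ∗_{d_{i,j}} v)_n + y_n) and v_n = Σ_{i,j} w_{i,j} (h^{i,j} ∗_{d_{i,j}} v)_n + y_n − q_n, where (h ∗_d v)_n = Σ_{k=1}^L h_k v_{n − k d}. If Σ_{i,j} w_{i,j} ‖h^{i,j}‖₁ + sup_{n∈ℕ²} |y_n| ≤ 2, then |v_n| ≤ 1 for all n ∈ ℕ². -/
/-- Stability of the weighted 1-bit ΣΔ quantizer in two dimensions: if
`Σ_{i,j} w_{i,j} ‖h^{i,j}‖₁ + sup_{n ∈ ℕ²} |y_n| ≤ 2`, then `|v_n| ≤ 1` for all `n ∈ ℕ²`. -/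
theorem stmt_1 (p s ℓ L : ℕ) (w : ℤ → ℤ → ℝ) (h : ℤ → ℤ → ℤ → ℝ)
    (hw_nonneg : ∀ i j : ℤ, 0 ≤ w i j)
    (hw_zero : ∀ j : ℤ, j ≤ 0 → w 0 j = 0)
    (hw_sum : ∑ i ∈ Finset.Icc (0 : ℤ) (p : ℤ), ∑ j ∈ Finset.Icc (-(s : ℤ)) (ℓ : ℤ), w i j = 1)
    (hh_causal : ∀ i j k : ℤ, k ≤ 0 → h i j k = 0)
    (hh_supp : ∀ i j k : ℤ, (L : ℤ) < k → h i j k = 0)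
    (y v q : ℤ × ℤ → ℝ)
    (hv_neg : ∀ n : ℤ × ℤ, n.1 < 0 ∨ n.2 < 0 → v n = 0)
    (hq : ∀ n : ℤ × ℤ, 0 ≤ n.1 → 0 ≤ n.2 → q n =
      sgn ((∑ i ∈ Finset.Icc (0 : ℤ) (p : ℤ), ∑ j ∈ Finset.Icc (-(s : ℤ)) (ℓ : ℤ),
        w i j * ∑ k ∈ Finset.Icc (1 : ℤ) (L : ℤ), h i j k * v (n.1 - k * i, n.2 - k * j)) + y n))
    (hv : ∀ n : ℤ × ℤ, 0 ≤ n.1 → 0 ≤ n.2 → v n =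
      (∑ i ∈ Finset.Icc (0 : ℤ) (p : ℤ), ∑ j ∈ Finset.Icc (-(s : ℤ)) (ℓ : ℤ),
        w i j * ∑ k ∈ Finset.Icc (1 : ℤ) (L : ℤ), h i j k * v (n.1 - k * i, n.2 - k * j))
        + y n - q n)
    (hbound : ∀ n : ℤ × ℤ, 0 ≤ n.1 → 0 ≤ n.2 →
      (∑ i ∈ Finset.Icc (0 : ℤ) (p : ℤ), ∑ j ∈ Finset.Icc (-(s : ℤ)) (ℓ : ℤ),
        w i j * ∑ k ∈ Finset.Icc (1 : ℤ) (L : ℤ), |h i j k|) + |y n| ≤ 2) :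
    ∀ n : ℤ × ℤ, 0 ≤ n.1 → 0 ≤ n.2 → |v n| ≤ 1 := by
  have key : ∀ a b : ℕ, |v ((a : ℤ), (b : ℤ))| ≤ 1 := by
    intro a
    induction a using Nat.strong_induction_on with
    | _ a iha =>
    intro b
    induction b using Nat.strong_induction_on with
    | _ b ihb =>
    have prev : ∀ m1 m2 : ℤ, (m1 < a ∨ (m1 = a ∧ m2 < b)) → |v (m1, m2)| ≤ 1 := by
      intro m1 m2 hm
      by_cases hneg : m1 < 0 ∨ m2 < 0
      · rw [hv_neg (m1, m2) hneg]; simp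
      · push Not at hneg
        obtain ⟨h1, h2⟩ := hneg
        lift m1 to ℕ using h1
        lift m2 to ℕ using h2
        rcases hm with hm | ⟨hm, hm'⟩
        · exact iha m1 (by exact_mod_cast hm) m2
        · have : m1 = a := by exact_mod_cast hm
          subst this
          exact ihb m2 (by exact_mod_cast hm')
    have ha : (0 : ℤ) ≤ ((a : ℤ), (b : ℤ)).1 := by simp
    have hb : (0 : ℤ) ≤ ((a : ℤ), (b : ℤ)).2 := by simp
    have e1 := hq _ ha hb
    have e2 := hv _ ha hb
    have e3 := hbound _ ha hb
    have hS : |∑ i ∈ Finset.Icc (0 : ℤ) (p : ℤ), ∑ j ∈ Finset.Icc (-(s : ℤ)) (ℓ : ℤ),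
        w i j * ∑ k ∈ Finset.Icc (1 : ℤ) (L : ℤ), h i j k * v ((a : ℤ) - k * i, (b : ℤ) - k * j)|
        ≤ ∑ i ∈ Finset.Icc (0 : ℤ) (p : ℤ), ∑ j ∈ Finset.Icc (-(s : ℤ)) (ℓ : ℤ),
        w i j * ∑ k ∈ Finset.Icc (1 : ℤ) (L : ℤ), |h i j k| := by
      refine (Finset.abs_sum_le_sum_abs _ _).trans (Finset.sum_le_sum fun i hi => ?_)
      refine (Finset.abs_sum_le_sum_abs _ _).trans (Finset.sum_le_sum fun j hj => ?_)
      rw [abs_mul, abs_of_nonneg (hw_nonneg i j)]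
      have hi0 := (Finset.mem_Icc.1 hi).1
      by_cases hz : i = 0 ∧ j ≤ 0
      · rw [hz.1, hw_zero j hz.2]; simp
      refine mul_le_mul_of_nonneg_left ?_ (hw_nonneg i j)
      refine (Finset.abs_sum_le_sum_abs _ _).trans (Finset.sum_le_sum fun k hk => ?_)
      rw [abs_mul]
      refine mul_le_of_le_one_right (abs_nonneg _) (prev _ _ ?_)
      have hk1 := (Finset.mem_Icc.1 hk).1
      by_cases hi' : i = 0
      · have hj' : 0 < j := by
          by_contra hc
          exact hz ⟨hi', by omega⟩
        right
        subst hi'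
        exact ⟨by simp, by nlinarith⟩
      · left
        have : 0 < i := by omega
        nlinarith
    rw [e2, e1]
    dsimp only at e3 ⊢
    generalize (∑ i ∈ Finset.Icc (0 : ℤ) (p : ℤ), ∑ j ∈ Finset.Icc (-(s : ℤ)) (ℓ : ℤ),
        w i j * ∑ k ∈ Finset.Icc (1 : ℤ) (L : ℤ),
          h i j k * v ((a : ℤ) - k * i, (b : ℤ) - k * j)) = S at hS ⊢
    have hx := (abs_add_le S (y ((a : ℤ), (b : ℤ)))).trans ((add_le_add_left hS _).trans e3)
    rw [abs_le] at hx
    unfold sgn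
    rw [abs_le]
    split_ifs with hpos
    · constructor <;> linarith [hx.1, hx.2]
    · constructor <;> linarith [hx.1, hx.2]
  rintro ⟨a, b⟩ ha hb
  dsimp only at ha hb
  lift a to ℕ using ha
  lift b to ℕ using hb
  exact key a b
end

section
/- Fix p, s, ℓ ∈ ℕ and a weight matrix w = (w_{i,j}), i ∈ {0,…,p}, j ∈ {−s,…,ℓ}, with w_{i,j} ≥ 0, w_{0,j} = 0 for j ≤ 0, and Σ_{i,j} w_{i,j} = 1; let d_{i,j} = (i,j) ∈ ℤ². Given y : ℕ² → ℝ, define the state v : ℤ² → ℝ and output q : ℕ² → {−1,1} of the first-order weighted ΣΔ quantizer by v_n = 0 for n ∉ ℕ² and, for n ∈ ℕ² in raster order, q_n = sign(Σ_{i,j} w_{i,j} v_{n − d_{i,j}} + y_n) and v_n = Σ_{i,j} w_{i,j} v_{n − d_{i,j}} + y_n − q_n. If sup_{n∈ℕ²} |y_n| ≤ 1, then |v_n| ≤ 1 for all n ∈ ℕ². -/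
/-- Stability of the first-order weighted 1-bit ΣΔ quantizer in two dimensions:
if `sup_{n ∈ ℕ²} |y_n| ≤ 1` then `|v_n| ≤ 1` for all `n ∈ ℕ²`. -/
theorem stmt_2 (p s ℓ : ℕ) (w : ℤ → ℤ → ℝ)
    (hw_nonneg : ∀ i j : ℤ, 0 ≤ w i j)
    (hw_zero : ∀ j : ℤ, j ≤ 0 → w 0 j = 0)
    (hw_sum : ∑ i ∈ Finset.Icc (0 : ℤ) (p : ℤ), ∑ j ∈ Finset.Icc (-(s : ℤ)) (ℓ : ℤ), w i j = 1)
    (y v q : ℤ × ℤ → ℝ)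
    (hv_neg : ∀ n : ℤ × ℤ, n.1 < 0 ∨ n.2 < 0 → v n = 0)
    (hq : ∀ n : ℤ × ℤ, 0 ≤ n.1 → 0 ≤ n.2 → q n =
      sgn ((∑ i ∈ Finset.Icc (0 : ℤ) (p : ℤ), ∑ j ∈ Finset.Icc (-(s : ℤ)) (ℓ : ℤ),
        w i j * v (n.1 - i, n.2 - j)) + y n))
    (hv : ∀ n : ℤ × ℤ, 0 ≤ n.1 → 0 ≤ n.2 → v n =
      (∑ i ∈ Finset.Icc (0 : ℤ) (p : ℤ), ∑ j ∈ Finset.Icc (-(s : ℤ)) (ℓ : ℤ),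
        w i j * v (n.1 - i, n.2 - j)) + y n - q n)
    (hbound : ∀ n : ℤ × ℤ, 0 ≤ n.1 → 0 ≤ n.2 → |y n| ≤ 1) :
    ∀ n : ℤ × ℤ, 0 ≤ n.1 → 0 ≤ n.2 → |v n| ≤ 1 := by
  have step : ∀ n : ℤ × ℤ, 0 ≤ n.1 → 0 ≤ n.2 →
      (∀ m : ℤ × ℤ, m.1 < n.1 ∨ (m.1 = n.1 ∧ m.2 < n.2) → |v m| ≤ 1) → |v n| ≤ 1 := by
    intro n h1 h2 ih
    have hS : |∑ i ∈ Finset.Icc (0 : ℤ) (p : ℤ), ∑ j ∈ Finset.Icc (-(s : ℤ)) (ℓ : ℤ),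
        w i j * v (n.1 - i, n.2 - j)| ≤ 1 := by
      rw [← hw_sum]
      refine (Finset.abs_sum_le_sum_abs _ _).trans (Finset.sum_le_sum fun i hi => ?_)
      refine (Finset.abs_sum_le_sum_abs _ _).trans (Finset.sum_le_sum fun j _ => ?_)
      have hi0 := (Finset.mem_Icc.1 hi).1
      rw [abs_mul, abs_of_nonneg (hw_nonneg i j)]
      by_cases hz : i = 0 ∧ j ≤ 0
      · rw [hz.1, hw_zero j hz.2]; simp
      · refine mul_le_of_le_one_right (hw_nonneg i j) (ih _ ?_)
        simp only
        omega
    have hy := hbound n h1 h2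
    rw [hv n h1 h2, hq n h1 h2]
    unfold sgn
    rw [abs_le] at *
    split_ifs with h <;> constructor <;> linarith [hS.1, hS.2, hy.1, hy.2]
  have row : ∀ a : ℕ, ∀ b : ℕ, |v ((a : ℤ), (b : ℤ))| ≤ 1 := by
    intro a
    induction a using Nat.strong_induction_on with
    | _ a iha =>
      intro b
      induction b using Nat.strong_induction_on with
      | _ b ihb =>
        refine step _ (by simp) (by simp) ?_
        rintro ⟨m1, m2⟩ hm
        simp only at hm
        by_cases hneg : m1 < 0 ∨ m2 < 0
        · rw [hv_neg (m1, m2) hneg]; simp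
        · push Not at hneg
          obtain ⟨c, rfl⟩ := Int.eq_ofNat_of_zero_le hneg.1
          obtain ⟨d, rfl⟩ := Int.eq_ofNat_of_zero_le hneg.2
          rcases hm with hm | ⟨he, hm⟩
          · exact iha c (by omega) d
          · rw [he]; exact ihb d (by omega)
  rintro ⟨n1, n2⟩ h1 h2
  obtain ⟨c, rfl⟩ := Int.eq_ofNat_of_zero_le h1
  obtain ⟨d, rfl⟩ := Int.eq_ofNat_of_zero_le h2
  exact row c d
end

section
/- Let r ≥ 1 and let h : ℤ → ℝ be a feedback filter supported on {1,…,L} satisfying the order-r vanishing moment conditions, i.e. Σ_{j=1}^L h_j = 1 and Σ_{j=1}^L h_j j^k = 0 for k = 1,…,r−1, and let C_h = Σ_{j=1}^L h_j j^r be its filter constant. Let Ψ : ℝ² → ℝ be r-times continuously differentiable, and for a ∈ ℝ² let R_{a,r}(u) = Ψ(a+u) − Σ_{ℓ=0}^r Σ_{|α|=ℓ} (u^α/α!) ∂^α Ψ(a) be the r-th order Taylor remainder of Ψ at a. Then for all a, d ∈ ℝ²: Σ_{k=1}^L h_k Ψ(a − k d) = Ψ(a) + (−1)^r C_h Σ_{|α|=r}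 (d^α/α!) ∂^α Ψ(a) + Σ_{k=1}^L h_k R_{a,r}(−k d). -/
/-- Partial derivative in the first coordinate of a function on `ℝ²`. -/
noncomputable def pd1 (f : ℝ × ℝ → ℝ) : ℝ × ℝ → ℝ :=
  fun x => deriv (fun t => f (t, x.2)) x.1

/-- Partial derivative in the second coordinate of a function on `ℝ²`. -/
noncomputable def pd2 (f : ℝ × ℝ → ℝ) : ℝ × ℝ → ℝ :=
  fun x => deriv (fun t => f (x.1, t)) x.2

/-- Mixed partial derivative `∂^α` for the multi-index `α = (a, b)`. -/
noncomputable def pdm (a b : ℕ) (f : ℝ × ℝ → ℝ) : ℝ × ℝ → ℝ :=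
  pd1^[a] (pd2^[b] f)

/-- The `r`-th order Taylor remainder of `Ψ : ℝ² → ℝ` at `a`:
`R_{a,r}(u) = Ψ(a+u) − Σ_{ℓ=0}^r Σ_{|α|=ℓ} (u^α/α!) ∂^α Ψ(a)`. -/
noncomputable def taylorRem2 (r : ℕ) (Ψ : ℝ × ℝ → ℝ) (a u : ℝ × ℝ) : ℝ :=
  Ψ (a + u) - ∑ l ∈ Finset.range (r + 1), ∑ m ∈ Finset.range (l + 1),
    u.1 ^ (l - m) * u.2 ^ m / ((l - m).factorial * m.factorial) * pdm (l - m) m Ψ a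

/-- Directional generalized convolution identity: for a feedback filter `h` with `r`
vanishing moments and filter constant `C_h = Σ_j h_j j^r`, one has
`Σ_k h_k Ψ(a − k d) = Ψ(a) + (−1)^r C_h Σ_{|α|=r} (d^α/α!) ∂^α Ψ(a) + Σ_k h_k R_{a,r}(−k d)`. -/
theorem stmt_3 (r L : ℕ) (hr : 1 ≤ r) (h : ℤ → ℝ)
    (hcausal : ∀ n : ℤ, n ≤ 0 → h n = 0)
    (hsupp : ∀ n : ℤ, (L : ℤ) < n → h n = 0)
    (hm0 : ∑ j ∈ Finset.Icc (1 : ℤ) (L : ℤ), h j = 1)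
    (hmk : ∀ k : ℕ, 1 ≤ k → k < r →
      ∑ j ∈ Finset.Icc (1 : ℤ) (L : ℤ), h j * (j : ℝ) ^ k = 0)
    (Ψ : ℝ × ℝ → ℝ) (hΨ : ContDiff ℝ (r : ℕ∞) Ψ) (a d : ℝ × ℝ) :
    ∑ k ∈ Finset.Icc (1 : ℤ) (L : ℤ), h k * Ψ (a - (k : ℝ) • d)
      = Ψ a
        + (-1) ^ r * (∑ j ∈ Finset.Icc (1 : ℤ) (L : ℤ), h j * (j : ℝ) ^ r) *
          (∑ m ∈ Finset.range (r + 1),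
            d.1 ^ (r - m) * d.2 ^ m / ((r - m).factorial * m.factorial) * pdm (r - m) m Ψ a)
        + ∑ k ∈ Finset.Icc (1 : ℤ) (L : ℤ), h k * taylorRem2 r Ψ a (-((k : ℝ) • d)) := by
  set T : ℕ → ℝ := fun l => ∑ m ∈ Finset.range (l + 1),
    d.1 ^ (l - m) * d.2 ^ m / ((l - m).factorial * m.factorial) * pdm (l - m) m Ψ a with hT
  set M : ℕ → ℝ := fun l => ∑ j ∈ Finset.Icc (1 : ℤ) (L : ℤ), h j * (j : ℝ) ^ l with hM
  have hrem : ∀ k : ℤ, taylorRem2 r Ψ a (-((k : ℝ) • d))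
      = Ψ (a - (k : ℝ) • d) - ∑ l ∈ Finset.range (r + 1), (-1) ^ l * (k : ℝ) ^ l * T l := by
    intro k
    unfold taylorRem2
    rw [← sub_eq_add_neg]
    congr 1
    refine Finset.sum_congr rfl fun l _ => ?_
    rw [hT, Finset.mul_sum]
    refine Finset.sum_congr rfl fun m hm => ?_
    have hml : m ≤ l := Nat.lt_succ_iff.mp (Finset.mem_range.mp hm)
    obtain ⟨n, rfl⟩ := Nat.exists_eq_add_of_le hml
    have e1 : (-((k : ℝ) • d)).1 = (-1) * k * d.1 := by simp
    have e2 : (-((k : ℝ) • d)).2 = (-1) * k * d.2 := by simp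
    rw [e1, e2, Nat.add_sub_cancel_left]
    simp only [mul_pow, pow_add]
    ring
  have hsum : ∑ k ∈ Finset.Icc (1 : ℤ) (L : ℤ), h k * taylorRem2 r Ψ a (-((k : ℝ) • d))
      = ∑ k ∈ Finset.Icc (1 : ℤ) (L : ℤ), h k * Ψ (a - (k : ℝ) • d)
        - ∑ l ∈ Finset.range (r + 1), (-1) ^ l * M l * T l := by
    simp only [hrem, mul_sub, Finset.sum_sub_distrib]
    congr 1
    simp only [Finset.mul_sum]
    rw [Finset.sum_comm]
    refine Finset.sum_congr rfl fun l _ => ?_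
    rw [show (-1 : ℝ) ^ l * M l * T l = M l * ((-1) ^ l * T l) by ring]
    change _ = (∑ j ∈ Finset.Icc (1 : ℤ) (L : ℤ), h j * (j : ℝ) ^ l) * ((-1) ^ l * T l)
    rw [Finset.sum_mul]
    refine Finset.sum_congr rfl fun k _ => ?_
    ring
  have hT0 : T 0 = Ψ a := by simp [hT, pdm]
  have hM0 : M 0 = 1 := by simpa [hM] using hm0
  have hmid : ∑ l ∈ Finset.range (r + 1), (-1) ^ l * M l * T l
      = Ψ a + (-1) ^ r * M r * T r := by
    rw [Finset.sum_range_succ]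
    congr 1
    rw [Finset.sum_eq_single_of_mem 0 (Finset.mem_range.mpr hr)]
    · simp [hT0, hM0]
    · intro l hl hl0
      have hz : M l = 0 := hmk l (Nat.one_le_iff_ne_zero.mpr hl0) (Finset.mem_range.mp hl)
      simp [hz]
  rw [hsum, hmid]
  ring
end

section
/- Let r ≥ 1 and let h : ℤ → ℝ be a feedback filter supported on {1,…,L} satisfying the order-r vanishing moment conditions, with filter constant C_h = Σ_{j=1}^L h_j j^r. Let Φ : ℝ → ℝ be r-times continuously differentiable and, for a ∈ ℝ, let R_{a,r}(t) = Φ(a+t) − Σ_{p=0}^r (t^p/p!) Φ^{(p)}(a) be the r-th order Taylor remainder of Φ at a. Then for all a ∈ ℝ and δ > 0: Φ(a) − Σ_{j=1}^L h_j Φ(a − jδ) = (−1)^{r+1} (C_h δ^r / r!) Φ^{(r)}(a) − Σ_{j=1}^L h_j R_{a,r}(−jδ). -/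
/-- The `r`-th order Taylor remainder of `Φ : ℝ → ℝ` at `a`:
`R_{a,r}(t) = Φ(a+t) − Σ_{p=0}^r (t^p/p!) Φ^{(p)}(a)`. -/
noncomputable def taylorRem1 (r : ℕ) (Φ : ℝ → ℝ) (a t : ℝ) : ℝ :=
  Φ (a + t) - ∑ p ∈ Finset.range (r + 1), t ^ p / p.factorial * iteratedDeriv p Φ a

/-- One-dimensional convolution identity: for a feedback filter `h` with `r` vanishing
moments and filter constant `C_h = Σ_j h_j j^r`, for all `a ∈ ℝ` and `δ > 0`,
`Φ(a) − Σ_j h_j Φ(a − jδ) = (−1)^{r+1} (C_h δ^r / r!) Φ^{(r)}(a) − Σ_j h_j R_{a,r}(−jδ)`. -/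
theorem stmt_4 (r L : ℕ) (hr : 1 ≤ r) (h : ℤ → ℝ)
    (hcausal : ∀ n : ℤ, n ≤ 0 → h n = 0)
    (hsupp : ∀ n : ℤ, (L : ℤ) < n → h n = 0)
    (hm0 : ∑ j ∈ Finset.Icc (1 : ℤ) (L : ℤ), h j = 1)
    (hmk : ∀ k : ℕ, 1 ≤ k → k < r →
      ∑ j ∈ Finset.Icc (1 : ℤ) (L : ℤ), h j * (j : ℝ) ^ k = 0)
    (Φ : ℝ → ℝ) (hΦ : ContDiff ℝ (r : ℕ∞) Φ) (a δ : ℝ) (hδ : 0 < δ) :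
    Φ a - ∑ j ∈ Finset.Icc (1 : ℤ) (L : ℤ), h j * Φ (a - (j : ℝ) * δ)
      = (-1) ^ (r + 1) *
          ((∑ j ∈ Finset.Icc (1 : ℤ) (L : ℤ), h j * (j : ℝ) ^ r) * δ ^ r / r.factorial) *
            iteratedDeriv r Φ a
        - ∑ j ∈ Finset.Icc (1 : ℤ) (L : ℤ), h j * taylorRem1 r Φ a (-((j : ℝ) * δ)) := by
  have key : ∑ j ∈ Finset.Icc (1 : ℤ) (L : ℤ), h j * taylorRem1 r Φ a (-((j : ℝ) * δ))
      = ∑ j ∈ Finset.Icc (1 : ℤ) (L : ℤ), h j * Φ (a - (j : ℝ) * δ)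
        - ∑ p ∈ Finset.range (r + 1), (∑ j ∈ Finset.Icc (1 : ℤ) (L : ℤ), h j * (j : ℝ) ^ p) *
            ((-δ) ^ p / p.factorial * iteratedDeriv p Φ a) := by
    simp only [taylorRem1, mul_sub, Finset.sum_sub_distrib, ← sub_eq_add_neg]
    congr 1
    simp only [Finset.mul_sum, Finset.sum_mul]
    rw [Finset.sum_comm]
    refine Finset.sum_congr rfl fun p _ => Finset.sum_congr rfl fun j _ => ?_
    rw [← mul_neg, mul_pow]
    ring
  have hsum : ∑ p ∈ Finset.range r, (∑ j ∈ Finset.Icc (1 : ℤ) (L : ℤ), h j * (j : ℝ) ^ p) *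
            ((-δ) ^ p / p.factorial * iteratedDeriv p Φ a) = Φ a := by
    rw [Finset.sum_eq_single 0]
    · simp [hm0]
    · intro p hp h0
      rw [hmk p (Nat.one_le_iff_ne_zero.mpr h0) (Finset.mem_range.mp hp), zero_mul]
    · intro h0
      exact absurd (Finset.mem_range.mpr hr) h0
  rw [key, Finset.sum_range_succ, hsum, neg_pow δ r]
  ring
end

section
/- Let r ≥ 1 and let c : ℤ → ℝ be finitely supported with c_n = 0 for n < 0. Then the following are equivalent: (i) there exists a finitely supported g : ℤ → ℝ with g_n = 0 for n < 0 such that c = Δ^r g, where Δ is the backward finite difference operator (Δg)_n = g_n − g_{n−1}; (ii) c has r vanishing moments, i.e. Σ_{n∈ℤ} c_n n^k = 0 for every k = 0,…,r−1 (with the convention 0⁰ = 1). -/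
/-- The backward finite difference operator on sequences indexed by `ℤ`:
`(Δg)_n = g_n − g_{n−1}`. -/
def bdiff (g : ℤ → ℝ) : ℤ → ℝ := fun n => g n - g (n - 1)

/-- causal and finitely supported -/
def CausFin (g : ℤ → ℝ) : Prop :=
  (∀ n : ℤ, n < 0 → g n = 0) ∧ (∃ M : ℤ, ∀ n : ℤ, M < n → g n = 0)

lemma CausFin.supp {g : ℤ → ℝ} (h : CausFin g) (f : ℤ → ℝ) :
    (Function.support fun n => g n * f n).Finite := by
  obtain ⟨h0, M, hM⟩ := h
  refine (Set.finite_Icc (0 : ℤ) M).subset fun n hn => ?_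
  simp only [Function.mem_support] at hn
  constructor
  · by_contra hlt
    exact hn (by rw [h0 n (by omega), zero_mul])
  · by_contra hlt
    exact hn (by rw [hM n (by omega), zero_mul])

lemma CausFin.bdiff {g : ℤ → ℝ} (h : CausFin g) : CausFin (bdiff g) := by
  obtain ⟨h0, M, hM⟩ := h
  refine ⟨fun n hn => ?_, M + 1, fun n hn => ?_⟩
  · simp [_root_.bdiff, h0 n hn, h0 (n - 1) (by omega)]
  · simp [_root_.bdiff, hM n (by omega), hM (n - 1) (by omega)]

lemma CausFin.iter {g : ℤ → ℝ} (h : CausFin g) (r : ℕ) : CausFin (_root_.bdiff^[r] g) := by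
  induction r with
  | zero => exact h
  | succ r ih => rw [Function.iterate_succ_apply']; exact ih.bdiff

lemma CausFin.moment {d : ℤ → ℝ} (h : CausFin d) (k : ℕ) :
    ∑ᶠ n : ℤ, _root_.bdiff d n * (n : ℝ) ^ k
      = - ∑ j ∈ Finset.range k, (k.choose j : ℝ) * ∑ᶠ n : ℤ, d n * (n : ℝ) ^ j := by
  have e2 : ∑ᶠ n : ℤ, d (n - 1) * (n : ℝ) ^ k = ∑ᶠ n : ℤ, d n * ((n : ℝ) + 1) ^ k := by
    rw [← finsum_comp_equiv (Equiv.addRight (1 : ℤ))]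
    simp
  have s2 : (Function.support fun n : ℤ => d (n - 1) * (n : ℝ) ^ k).Finite := by
    have := (h.supp fun n => ((n : ℝ) + 1) ^ k).preimage
      (f := fun n : ℤ => n - 1) (fun a _ b _ hab => by simpa using hab)
    refine this.subset fun n hn => ?_
    simpa using hn
  have e1 : ∑ᶠ n : ℤ, _root_.bdiff d n * (n : ℝ) ^ k
      = ∑ᶠ n : ℤ, d n * (n : ℝ) ^ k - ∑ᶠ n : ℤ, d n * ((n : ℝ) + 1) ^ k := by
    rw [← e2, ← finsum_sub_distrib (h.supp fun n => (n : ℝ) ^ k) s2]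
    simp only [_root_.bdiff, sub_mul]
  have e3 : ∑ᶠ n : ℤ, d n * ((n : ℝ) + 1) ^ k
      = ∑ j ∈ Finset.range (k + 1), (k.choose j : ℝ) * ∑ᶠ n : ℤ, d n * (n : ℝ) ^ j := by
    simp only [mul_finsum]
    rw [← finsum_sum_comm]
    · refine finsum_congr fun n => ?_
      rw [add_pow, Finset.mul_sum]
      refine Finset.sum_congr rfl fun j _ => ?_
      simp only [one_pow]
      ring
    · intro j _
      refine (h.supp fun n => (k.choose j : ℝ) * (n : ℝ) ^ j).subset fun n hn => ?_
      simp only [Function.mem_support] at hn ⊢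
      intro h; apply hn; rw [← h]; ring
  rw [e1, e3, Finset.sum_range_succ]
  simp

lemma CausFin.moment_iff {d : ℤ → ℝ} (h : CausFin d) (r : ℕ) :
    (∀ k : ℕ, k < r + 1 → ∑ᶠ n : ℤ, _root_.bdiff d n * (n : ℝ) ^ k = 0)
      ↔ (∀ k : ℕ, k < r → ∑ᶠ n : ℤ, d n * (n : ℝ) ^ k = 0) := by
  constructor
  · intro H k
    induction k using Nat.strong_induction_on with
    | _ k ih =>
      intro hk
      have := H (k + 1) (by omega)
      rw [h.moment, Finset.sum_range_succ, Finset.sum_eq_zero, zero_add, neg_eq_zero,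
        mul_eq_zero] at this
      · rcases this with h1 | h1
        · rw [Nat.choose_succ_self_right] at h1
          norm_cast at h1
        · exact h1
      · intro j hj
        rw [Finset.mem_range] at hj
        rw [ih j hj (by omega), mul_zero]
  · intro H k hk
    rw [h.moment, Finset.sum_eq_zero, neg_zero]
    intro j hj
    rw [Finset.mem_range] at hj
    rw [H j (by omega), mul_zero]

lemma CausFin.exists_sum {c : ℤ → ℝ} (h : CausFin c) (h0 : ∑ᶠ n : ℤ, c n = 0) :
    ∃ d, CausFin d ∧ c = _root_.bdiff d := by
  obtain ⟨hn, M, hM⟩ := h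
  refine ⟨fun n => ∑ i ∈ Finset.Icc 0 n, c i, ⟨fun n h => ?_, M, fun n h => ?_⟩, ?_⟩
  · simp [Finset.Icc_eq_empty_of_lt h]
  · rw [← h0]
    symm
    apply finsum_eq_sum_of_support_subset
    intro i hi
    simp only [Function.mem_support] at hi
    simp only [Finset.coe_Icc, Set.mem_Icc]
    constructor
    · by_contra hlt
      exact hi (hn i (by omega))
    · by_contra hlt
      exact hi (hM i (by omega))
  · funext n
    simp only [_root_.bdiff]
    rcases lt_or_ge n 0 with h | h
    · rw [Finset.Icc_eq_empty_of_lt h, Finset.Icc_eq_empty_of_lt (by omega), hn n h]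
      simp
    · have : Finset.Icc 0 n = insert n (Finset.Icc 0 (n - 1)) := by
        ext i
        simp only [Finset.mem_Icc, Finset.mem_insert]
        omega
      rw [this, Finset.sum_insert (by simp)]
      ring

lemma CausFin.main (r : ℕ) : ∀ c : ℤ → ℝ, CausFin c →
    ((∃ g : ℤ → ℝ, CausFin g ∧ c = _root_.bdiff^[r] g)
      ↔ (∀ k : ℕ, k < r → ∑ᶠ n : ℤ, c n * (n : ℝ) ^ k = 0)) := by
  induction r with
  | zero =>
    intro c hc
    simp only [Nat.not_lt_zero, false_imp_iff, implies_true, iff_true]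
    exact ⟨c, hc, rfl⟩
  | succ r ih =>
    intro c hc
    constructor
    · rintro ⟨g, hg, rfl⟩
      rw [Function.iterate_succ_apply', (hg.iter r).moment_iff]
      exact (ih _ (hg.iter r)).1 ⟨g, hg, rfl⟩
    · intro H
      obtain ⟨d, hd, rfl⟩ := hc.exists_sum (by simpa using H 0 (by omega))
      obtain ⟨g, hg, rfl⟩ := (ih d hd).2 ((hd.moment_iff r).1 H)
      exact ⟨g, hg, (Function.iterate_succ_apply' _ _ _).symm⟩

/-- A causal finitely supported sequence `c` can be written as `c = Δ^r g` with `g`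
causal and finitely supported if and only if `c` has `r` vanishing moments,
i.e. `Σ_n c_n n^k = 0` for `k = 0, …, r−1`. -/
theorem stmt_5 (r : ℕ) (hr : 1 ≤ r) (c : ℤ → ℝ)
    (hc_neg : ∀ n : ℤ, n < 0 → c n = 0)
    (hc_supp : ∃ N : ℤ, ∀ n : ℤ, N < n → c n = 0) :
    (∃ g : ℤ → ℝ, (∀ n : ℤ, n < 0 → g n = 0) ∧ (∃ M : ℤ, ∀ n : ℤ, M < n → g n = 0) ∧
        c = bdiff^[r] g)
      ↔ (∀ k : ℕ, k < r → ∑ᶠ n : ℤ, c n * (n : ℝ) ^ k = 0) := by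
  rw [← CausFin.main r c ⟨hc_neg, hc_supp⟩]
  simp only [CausFin, and_assoc]
end

section
/- Let h : ℤ → ℝ be a feedback filter supported on {1,…,L}, let y : ℕ → ℝ be bounded, and let v : ℤ → ℝ, q : ℕ → {−1,1} be produced by the 1-bit ΣΔ quantizer: v_n = 0 for n < 0 and, for n ≥ 0, q_n = sign((h∗v)_n + y_n), v_n = (h∗v)_n + y_n − q_n with (h∗v)_n = Σ_{j=1}^L h_j v_{n−j}. Assume there is V ≥ 0 with |v_n| ≤ V for all n. Let Φ : ℝ → ℝ be a Schwartz function. Then for every λ > 0 and every x ∈ ℝ, both series below converge absolutely and λ^{−1} Σ_{n∈ℕ} (y_n − q_n) Φ(x − n/λ) = λ^{−1} Σ_{n∈ℕ} v_n ( Φ(x − n/λ) − Σ_{j=1}^L h_j Φ(x − (n+j)/λ) ). -/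
theorem aux_summable (Φ : SchwartzMap ℝ ℝ) (lam : ℝ) (hlam : 0 < lam) (x c : ℝ) :
    Summable (fun n : ℕ => |Φ (x - ((n : ℝ) + c) / lam)|) := by
  obtain ⟨C0, h0⟩ := Φ.decay 0 0
  obtain ⟨C2, h2⟩ := Φ.decay 2 0
  obtain ⟨-, h0⟩ := h0
  obtain ⟨-, h2⟩ := h2
  have hs : Summable (fun n : ℕ => (2 * (lam * x - c + 1) ^ 2 * C0 + 2 * lam ^ 2 * C2) *
      (1 / (((n + 1 : ℕ) : ℝ)) ^ 2)) := by
    apply Summable.mul_left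
    exact (summable_nat_add_iff (f := fun n : ℕ => 1 / ((n : ℝ)) ^ 2) 1).2
      (Real.summable_one_div_nat_pow.2 (by norm_num))
  refine Summable.of_nonneg_of_le (fun n => abs_nonneg _) (fun n => ?_) hs
  set t := x - ((n : ℝ) + c) / lam with ht
  have e : ((n + 1 : ℕ) : ℝ) = (lam * x - c + 1) - lam * t := by
    rw [ht]; push_cast; field_simp; ring
  have a0 := h0 t
  have a2 := h2 t
  simp only [pow_zero, one_mul, norm_iteratedFDeriv_zero, Real.norm_eq_abs, sq_abs] at a0 a2
  have hpos : (0 : ℝ) < ((n + 1 : ℕ) : ℝ) ^ 2 := by positivity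
  rw [mul_one_div, le_div_iff₀ hpos]
  have hle : ((n + 1 : ℕ) : ℝ) ^ 2 ≤ 2 * (lam * x - c + 1) ^ 2 + 2 * lam ^ 2 * t ^ 2 := by
    rw [e]; nlinarith [sq_nonneg ((lam * x - c + 1) + lam * t)]
  calc |Φ t| * ((n + 1 : ℕ) : ℝ) ^ 2
      ≤ |Φ t| * (2 * (lam * x - c + 1) ^ 2 + 2 * lam ^ 2 * t ^ 2) :=
        mul_le_mul_of_nonneg_left hle (abs_nonneg _)
    _ = 2 * (lam * x - c + 1) ^ 2 * |Φ t| + 2 * lam ^ 2 * (t ^ 2 * |Φ t|) := by ring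
    _ ≤ _ := add_le_add (mul_le_mul_of_nonneg_left a0 (by positivity))
        (mul_le_mul_of_nonneg_left a2 (by positivity))

theorem aux_bdd (b g : ℕ → ℝ) (B : ℝ) (hb : ∀ n, |b n| ≤ B)
    (hg : Summable (fun n => |g n|)) : Summable (fun n => b n * g n) := by
  refine Summable.of_norm_bounded (hg.mul_left B) (fun n => ?_)
  rw [Real.norm_eq_abs, abs_mul]
  exact mul_le_mul_of_nonneg_right (hb n) (abs_nonneg _)

theorem aux_shift (v : ℤ → ℝ) (hv_neg : ∀ n : ℤ, n < 0 → v n = 0) (V : ℝ)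
    (hvb : ∀ n : ℤ, |v n| ≤ V) (g : ℕ → ℝ) (hg : Summable (fun n => |g n|)) (k : ℕ) :
    ∑' n : ℕ, v ((n : ℤ) - k) * g n = ∑' n : ℕ, v (n : ℤ) * g (n + k) := by
  have hs : Summable (fun n : ℕ => v ((n : ℤ) - k) * g n) :=
    aux_bdd _ _ V (fun n => hvb _) hg
  rw [← hs.sum_add_tsum_nat_add k, Finset.sum_eq_zero, zero_add]
  · refine tsum_congr (fun n => ?_)
    push_cast
    rw [add_sub_cancel_right]
  · intro i hi
    have := Finset.mem_range.1 hi
    rw [hv_neg _ (by omega), zero_mul]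

/-- Rewriting of the one-dimensional quantization error: for the 1-bit ΣΔ quantizer with
bounded state, both series converge absolutely and
`λ⁻¹ Σ_n (y_n − q_n) Φ(x − n/λ) = λ⁻¹ Σ_n v_n (Φ(x − n/λ) − Σ_j h_j Φ(x − (n+j)/λ))`. -/
theorem stmt_7 (L : ℕ) (h : ℤ → ℝ)
    (hcausal : ∀ n : ℤ, n ≤ 0 → h n = 0)
    (hsupp : ∀ n : ℤ, (L : ℤ) < n → h n = 0)
    (y : ℕ → ℝ) (hy : ∃ B : ℝ, ∀ n : ℕ, |y n| ≤ B)
    (v : ℤ → ℝ) (q : ℕ → ℝ)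
    (hv_neg : ∀ n : ℤ, n < 0 → v n = 0)
    (hq : ∀ n : ℕ, q n =
      sgn ((∑ j ∈ Finset.Icc (1 : ℤ) (L : ℤ), h j * v ((n : ℤ) - j)) + y n))
    (hv : ∀ n : ℕ, v (n : ℤ) =
      (∑ j ∈ Finset.Icc (1 : ℤ) (L : ℤ), h j * v ((n : ℤ) - j)) + y n - q n)
    (V : ℝ) (hV : 0 ≤ V) (hvb : ∀ n : ℤ, |v n| ≤ V)
    (Φ : SchwartzMap ℝ ℝ) (lam : ℝ) (hlam : 0 < lam) (x : ℝ) :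
    Summable (fun n : ℕ => |(y n - q n) * Φ (x - n / lam)|) ∧
    Summable (fun n : ℕ => |v (n : ℤ) *
      (Φ (x - n / lam) - ∑ j ∈ Finset.Icc (1 : ℤ) (L : ℤ),
        h j * Φ (x - ((n : ℝ) + (j : ℝ)) / lam))|) ∧
    lam⁻¹ * ∑' n : ℕ, (y n - q n) * Φ (x - n / lam)
      = lam⁻¹ * ∑' n : ℕ, v (n : ℤ) *
          (Φ (x - n / lam) - ∑ j ∈ Finset.Icc (1 : ℤ) (L : ℤ),
            h j * Φ (x - ((n : ℝ) + (j : ℝ)) / lam)) := by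
  have hf0 : Summable (fun n : ℕ => |Φ (x - n / lam)|) := by
    simpa using aux_summable Φ lam hlam x 0
  have hfv : ∀ j : ℤ, Summable (fun n : ℕ => v (n : ℤ) * Φ (x - ((n : ℝ) + (j : ℝ)) / lam)) :=
    fun j => aux_bdd _ _ V (fun n => hvb _) (aux_summable Φ lam hlam x j)
  have hfv0 : Summable (fun n : ℕ => v (n : ℤ) * Φ (x - (n : ℝ) / lam)) :=
    aux_bdd _ _ V (fun n => hvb _) hf0
  have hsh : ∀ j : ℤ, Summable (fun n : ℕ => v ((n : ℤ) - j) * Φ (x - (n : ℝ) / lam)) :=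
    fun j => aux_bdd _ _ V (fun n => hvb _) hf0
  have e1 : (fun n : ℕ => (y n - q n) * Φ (x - n / lam)) = fun n : ℕ =>
      v (n : ℤ) * Φ (x - (n : ℝ) / lam) - ∑ j ∈ Finset.Icc (1 : ℤ) (L : ℤ),
        h j * (v ((n : ℤ) - j) * Φ (x - (n : ℝ) / lam)) := by
    funext n
    have : y n - q n = v (n : ℤ) -
        ∑ j ∈ Finset.Icc (1 : ℤ) (L : ℤ), h j * v ((n : ℤ) - j) := by
      rw [hv n]; ring
    rw [this, sub_mul, Finset.sum_mul]
    simp only [mul_assoc]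
  have e2 : (fun n : ℕ => v (n : ℤ) *
      (Φ (x - n / lam) - ∑ j ∈ Finset.Icc (1 : ℤ) (L : ℤ),
        h j * Φ (x - ((n : ℝ) + (j : ℝ)) / lam))) = fun n : ℕ =>
      v (n : ℤ) * Φ (x - (n : ℝ) / lam) - ∑ j ∈ Finset.Icc (1 : ℤ) (L : ℤ),
        h j * (v (n : ℤ) * Φ (x - ((n : ℝ) + (j : ℝ)) / lam)) := by
    funext n
    rw [mul_sub, Finset.mul_sum]
    simp only [mul_left_comm]
  have s1 : Summable (fun n : ℕ => ∑ j ∈ Finset.Icc (1 : ℤ) (L : ℤ),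
        h j * (v ((n : ℤ) - j) * Φ (x - (n : ℝ) / lam))) :=
    summable_sum (fun j _ => (hsh j).mul_left (h j))
  have s2 : Summable (fun n : ℕ => ∑ j ∈ Finset.Icc (1 : ℤ) (L : ℤ),
        h j * (v (n : ℤ) * Φ (x - ((n : ℝ) + (j : ℝ)) / lam))) :=
    summable_sum (fun j _ => (hfv j).mul_left (h j))
  refine ⟨?_, ?_, ?_⟩
  · refine Summable.abs ?_
    rw [e1]; exact hfv0.sub s1
  · refine Summable.abs ?_
    rw [e2]; exact hfv0.sub s2
  · congr 1
    rw [e1, e2, hfv0.tsum_sub s1, hfv0.tsum_sub s2,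
      Summable.tsum_finsetSum (fun j _ => (hsh j).mul_left (h j)),
      Summable.tsum_finsetSum (fun j _ => (hfv j).mul_left (h j))]
    congr 1
    refine Finset.sum_congr rfl (fun j hj => ?_)
    rw [tsum_mul_left, tsum_mul_left]
    congr 1
    have hj1 := (Finset.mem_Icc.1 hj).1
    obtain ⟨k, rfl⟩ := Int.eq_ofNat_of_zero_le (by omega : 0 ≤ j)
    rw [aux_shift v hv_neg V hvb (fun n : ℕ => Φ (x - (n : ℝ) / lam)) hf0 k]
    refine tsum_congr (fun n => ?_)
    push_cast
    rfl
end

section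
/- Let g : ℝ → ℝ be a Schwartz function. Then for every λ > 0 and every x ∈ ℝ, λ^{−1} Σ_{n∈ℕ} |g(x − n/λ)| ≤ ‖g‖_{L¹(ℝ)} + λ^{−1} ‖g′‖_{L¹(ℝ)}. -/
open MeasureTheory

theorem step_aux (g : SchwartzMap ℝ ℝ) (a b : ℝ) (hab : a ≤ b) :
    (b - a) * |g b| ≤ ∫ t in a..b, (|g t| + (b - a) * |deriv (⇑g) t|) := by
  have hc : Continuous (⇑g) := g.continuous
  have hd : Continuous (deriv (⇑g)) := (g.smooth 1).continuous_deriv le_rfl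
  have key : ∀ t ∈ Set.Icc a b, |g b| ≤ |g t| + ∫ s in a..b, |deriv (⇑g) s| := by
    intro t ht
    have h1 : ∫ s in t..b, deriv (⇑g) s = g b - g t :=
      intervalIntegral.integral_deriv_eq_sub (fun s _ => g.differentiableAt)
        (hd.intervalIntegrable _ _)
    have h2 : |∫ s in t..b, deriv (⇑g) s| ≤ ∫ s in t..b, |deriv (⇑g) s| :=
      intervalIntegral.abs_integral_le_integral_abs ht.2
    have h3 : (∫ s in a..t, |deriv (⇑g) s|) + ∫ s in t..b, |deriv (⇑g) s|
        = ∫ s in a..b, |deriv (⇑g) s| :=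
      intervalIntegral.integral_add_adjacent_intervals
        (hd.abs.intervalIntegrable _ _) (hd.abs.intervalIntegrable _ _)
    have h4 : 0 ≤ ∫ s in a..t, |deriv (⇑g) s| :=
      intervalIntegral.integral_nonneg ht.1 (fun _ _ => abs_nonneg _)
    rw [h1] at h2
    have := abs_sub_abs_le_abs_sub (g b) (g t)
    linarith
  have h5 := intervalIntegral.integral_mono_on (μ := volume) hab
    (continuous_const.intervalIntegrable a b)
    ((hc.abs.add continuous_const).intervalIntegrable a b) key
  simp only [Pi.add_apply] at h5
  rw [intervalIntegral.integral_add (hc.abs.intervalIntegrable _ _)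
    (continuous_const.intervalIntegrable _ _)] at h5
  rw [intervalIntegral.integral_add (hc.abs.intervalIntegrable _ _)
    ((hd.abs.intervalIntegrable _ _).const_mul (b - a)),
    intervalIntegral.integral_const_mul]
  simpa using h5

/-- Quantitative Riemann-sum estimate for a Schwartz function `g` on `ℝ`:
`λ⁻¹ Σ_{n∈ℕ} |g(x − n/λ)| ≤ ‖g‖_{L¹} + λ⁻¹ ‖g′‖_{L¹}`. -/
theorem stmt_9 (g : SchwartzMap ℝ ℝ) (lam : ℝ) (hlam : 0 < lam) (x : ℝ) :
    lam⁻¹ * ∑' n : ℕ, |g (x - n / lam)|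
      ≤ (∫ t : ℝ, |g t|) + lam⁻¹ * ∫ t : ℝ, |deriv (⇑g) t| := by
  have hc : Continuous (⇑g) := g.continuous
  have hd : Continuous (deriv (⇑g)) := (g.smooth 1).continuous_deriv le_rfl
  have hh : 0 < lam⁻¹ := inv_pos.mpr hlam
  have hi : Integrable (fun t => |g t|) := g.integrable.abs
  have hi' : Integrable (fun t => lam⁻¹ * |deriv (⇑g) t|) :=
    ((SchwartzMap.derivCLM ℝ ℝ g).integrable (μ := volume)).abs.const_mul _
  have hF : Continuous (fun t => |g t| + lam⁻¹ * |deriv (⇑g) t|) :=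
    hc.abs.add (continuous_const.mul hd.abs)
  have hsum : ∀ N : ℕ, ∑ n ∈ Finset.range N, lam⁻¹ * |g (x - n / lam)|
      ≤ ∫ t in (x - N / lam)..x, (|g t| + lam⁻¹ * |deriv (⇑g) t|) := by
    intro N
    induction N with
    | zero => simp
    | succ N ih =>
      have e : (x - N / lam) - (x - ((N + 1 : ℕ) : ℝ) / lam) = lam⁻¹ := by
        push_cast; field_simp; ring
      have h := step_aux g (x - ((N + 1 : ℕ) : ℝ) / lam) (x - N / lam) (by linarith)
      rw [e] at h
      rw [Finset.sum_range_succ, ← intervalIntegral.integral_add_adjacent_intervals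
        (hF.intervalIntegrable _ (x - N / lam)) (hF.intervalIntegrable _ _)]
      linarith
  rw [← tsum_mul_left, ← integral_const_mul, ← integral_add hi hi']
  refine Real.tsum_le_of_sum_range_le (fun n => by positivity) (fun N => (hsum N).trans ?_)
  rw [intervalIntegral.integral_of_le (by have : 0 ≤ (N:ℝ) / lam := by positivity
                                          linarith)]
  exact setIntegral_le_integral (hi.add hi') (Filter.Eventually.of_forall fun t => by
    simp only [Pi.zero_apply]; positivity)
end

section
/- Let g : ℝ² → ℝ be a Schwartz function. Then for every λ > 0 and every x ∈ ℝ², λ^{−2} Σ_{n∈ℕ²} |g(x − n/λ)| ≤ ‖g‖_{L¹(ℝ²)} + λ^{−1} ( ‖∂₁ g‖_{L¹(ℝ²)} + ‖∂₂ g‖_{L¹(ℝ²)} ) + λ^{−2} ‖∂₁∂₂ g‖_{L¹(ℝ²)}. -/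
open MeasureTheory

lemma aux_hd1 (g : SchwartzMap (ℝ × ℝ) ℝ) (s t : ℝ) :
    HasDerivAt (fun u => g (u, t)) (LineDeriv.lineDerivOp ((1, 0) : ℝ × ℝ) g (s, t)) s := by
  rw [SchwartzMap.lineDerivOp_apply_eq_fderiv]
  have h := (g.differentiableAt (x := (s, t))).hasFDerivAt
  exact h.comp_hasDerivAt s ((hasDerivAt_id s).prodMk (hasDerivAt_const s t))

lemma aux_hd2 (g : SchwartzMap (ℝ × ℝ) ℝ) (s t : ℝ) :
    HasDerivAt (fun u => g (s, u)) (LineDeriv.lineDerivOp ((0, 1) : ℝ × ℝ) g (s, t)) t := by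
  rw [SchwartzMap.lineDerivOp_apply_eq_fderiv]
  have h := (g.differentiableAt (x := (s, t))).hasFDerivAt
  exact h.comp_hasDerivAt t ((hasDerivAt_const t s).prodMk (hasDerivAt_id t))

lemma aux_pd1 (g : SchwartzMap (ℝ × ℝ) ℝ) :
    pd1 g = LineDeriv.lineDerivOp ((1, 0) : ℝ × ℝ) g := by
  funext x
  exact (aux_hd1 g x.1 x.2).deriv

lemma aux_pd2 (g : SchwartzMap (ℝ × ℝ) ℝ) :
    pd2 g = LineDeriv.lineDerivOp ((0, 1) : ℝ × ℝ) g := by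
  funext x
  exact (aux_hd2 g x.1 x.2).deriv

lemma aux_one (f df : ℝ → ℝ) (hf : ∀ s, HasDerivAt f (df s) s) (hc : Continuous df)
    (a h : ℝ) (hh : 0 < h) :
    h * |f a| ≤ ∫ s in Set.Ioc (a - h) a, (|f s| + h * |df s|) := by
  have hfc : Continuous f := continuous_iff_continuousAt.2 fun s => (hf s).continuousAt
  have key : ∀ s ∈ Set.Ioc (a - h) a, |f a| ≤ |f s| + ∫ u in Set.Ioc (a - h) a, |df u| := by
    intro s hs
    have h1 : ∫ u in s..a, df u = f a - f s :=
      intervalIntegral.integral_eq_sub_of_hasDerivAt (fun u _ => hf u)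
        (hc.intervalIntegrable _ _)
    have h2 : |∫ u in s..a, df u| ≤ ∫ u in s..a, |df u| :=
      intervalIntegral.abs_integral_le_integral_abs hs.2
    have h3 : ∫ u in s..a, |df u| ≤ ∫ u in Set.Ioc (a - h) a, |df u| := by
      rw [intervalIntegral.integral_of_le hs.2]
      apply setIntegral_mono_set hc.abs.integrableOn_Ioc
      · exact Filter.Eventually.of_forall fun _ => abs_nonneg _
      · exact (Set.Ioc_subset_Ioc_left hs.1.le).eventuallyLE
    have h4 : |f a| ≤ |f s| + |f a - f s| := by
      have := abs_add_le (f s) (f a - f s)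
      simpa using this
    rw [h1] at h2
    linarith
  have hvol : (volume : Measure ℝ).real (Set.Ioc (a - h) a) = h := by
    rw [Real.volume_real_Ioc_of_le (by linarith)]; ring
  have hci : ∀ c : ℝ, ∫ _ in Set.Ioc (a - h) a, c = h * c := by
    intro c
    rw [setIntegral_const, hvol, smul_eq_mul]
  have hm : ∫ _ in Set.Ioc (a - h) a, |f a| ≤
      ∫ s in Set.Ioc (a - h) a, (|f s| + ∫ u in Set.Ioc (a - h) a, |df u|) :=
    setIntegral_mono_on continuous_const.integrableOn_Ioc
      (hfc.abs.add continuous_const).integrableOn_Ioc measurableSet_Ioc key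
  rw [hci, integral_add hfc.abs.integrableOn_Ioc continuous_const.integrableOn_Ioc, hci] at hm
  rw [integral_add hfc.abs.integrableOn_Ioc (hc.abs.const_mul h).integrableOn_Ioc,
    integral_const_mul]
  exact hm

lemma aux_two (g g1 g2 g12 : SchwartzMap (ℝ × ℝ) ℝ)
    (h1 : ∀ s t, HasDerivAt (fun u => g (u, t)) (g1 (s, t)) s)
    (h2 : ∀ s t, HasDerivAt (fun u => g (s, u)) (g2 (s, t)) t)
    (h12 : ∀ s t, HasDerivAt (fun u => g2 (u, t)) (g12 (s, t)) s)
    (F : ℝ × ℝ → ℝ) (h : ℝ) (hh : 0 < h)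
    (hF : F = fun p => |g p| + h * |g1 p| + h * |g2 p| + h ^ 2 * |g12 p|)
    (hFi : Integrable F) (a b : ℝ) :
    h ^ 2 * |g (a, b)| ≤ ∫ p in Set.Ioc (a - h) a ×ˢ Set.Ioc (b - h) b, F p := by
  have cg := g.continuous
  have cg1 := g1.continuous
  have cg2 := g2.continuous
  have cg12 := g12.continuous
  have hI : Integrable F (((volume : Measure ℝ).restrict (Set.Ioc (a - h) a)).prod
      ((volume : Measure ℝ).restrict (Set.Ioc (b - h) b))) := by
    rw [Measure.prod_restrict]
    exact hFi.integrableOn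
  rw [Measure.volume_eq_prod, ← Measure.prod_restrict, integral_prod_symm _ hI]
  have e1 := aux_one (fun u => g (a, u)) (fun u => g2 (a, u)) (h2 a) (by fun_prop) b h hh
  calc h ^ 2 * |g (a, b)| = h * (h * |g (a, b)|) := by ring
    _ ≤ h * ∫ t in Set.Ioc (b - h) b, (|g (a, t)| + h * |g2 (a, t)|) := by gcongr
    _ = ∫ t in Set.Ioc (b - h) b, h * (|g (a, t)| + h * |g2 (a, t)|) :=
        (integral_const_mul _ _).symm
    _ ≤ _ := by
      apply integral_mono
      · exact Continuous.integrableOn_Ioc (by fun_prop)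
      · exact hI.integral_prod_right
      · intro t
        have e2 := aux_one (fun u => g (u, t)) (fun u => g1 (u, t))
          (fun s => h1 s t) (by fun_prop) a h hh
        have e3 := aux_one (fun u => g2 (u, t)) (fun u => g12 (u, t))
          (fun s => h12 s t) (by fun_prop) a h hh
        have e4 : ∫ s in Set.Ioc (a - h) a, F (s, t) =
            (∫ s in Set.Ioc (a - h) a, (|g (s, t)| + h * |g1 (s, t)|)) +
            h * ∫ s in Set.Ioc (a - h) a, (|g2 (s, t)| + h * |g12 (s, t)|) := by
          rw [← integral_const_mul, ← integral_add]
          · congr 1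
            funext s
            rw [hF]
            ring
          · exact Continuous.integrableOn_Ioc (by fun_prop)
          · exact Continuous.integrableOn_Ioc (by fun_prop)
        have e5 := mul_le_mul_of_nonneg_left e3 hh.le
        show h * (|g (a, t)| + h * |g2 (a, t)|) ≤ ∫ s in Set.Ioc (a - h) a, F (s, t)
        rw [e4]
        linarith

lemma aux_disj (a h : ℝ) (hh : 0 < h) (m n : ℕ) (hmn : m ≠ n) :
    Disjoint (Set.Ioc (a - m * h - h) (a - m * h)) (Set.Ioc (a - n * h - h) (a - n * h)) := by
  wlog hlt : m < n generalizing m n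
  · exact (this n m hmn.symm (by omega)).symm
  rw [Set.disjoint_left]
  rintro s ⟨hs1, _⟩ ⟨_, hs2⟩
  have : (m : ℝ) + 1 ≤ n := by exact_mod_cast hlt
  nlinarith

/-- Quantitative Riemann-sum estimate for a Schwartz function `g` on `ℝ²`:
`λ⁻² Σ_{n∈ℕ²} |g(x − n/λ)| ≤ ‖g‖_{L¹} + λ⁻¹(‖∂₁g‖_{L¹} + ‖∂₂g‖_{L¹}) + λ⁻² ‖∂₁∂₂g‖_{L¹}`. -/
theorem stmt_10 (g : SchwartzMap (ℝ × ℝ) ℝ) (lam : ℝ) (hlam : 0 < lam) (x : ℝ × ℝ) :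
    (lam ^ 2)⁻¹ * ∑' n : ℕ × ℕ, |g (x.1 - n.1 / lam, x.2 - n.2 / lam)|
      ≤ (∫ t : ℝ × ℝ, |g t|)
        + lam⁻¹ * ((∫ t : ℝ × ℝ, |pd1 (⇑g) t|) + ∫ t : ℝ × ℝ, |pd2 (⇑g) t|)
        + (lam ^ 2)⁻¹ * ∫ t : ℝ × ℝ, |pd1 (pd2 (⇑g)) t| := by
  rw [aux_pd1, aux_pd2, aux_pd1]
  have hh : 0 < lam⁻¹ := inv_pos.2 hlam
  set h := lam⁻¹ with hdef
  set g1 := LineDeriv.lineDerivOp ((1, 0) : ℝ × ℝ) g with hg1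
  set g2 := LineDeriv.lineDerivOp ((0, 1) : ℝ × ℝ) g with hg2
  set g12 := LineDeriv.lineDerivOp ((1, 0) : ℝ × ℝ) g2 with hg12
  have i0 : Integrable (fun p => |g p|) := g.integrable.abs
  have i1 : Integrable (fun p => h * |g1 p|) := g1.integrable.abs.const_mul h
  have i2 : Integrable (fun p => h * |g2 p|) := g2.integrable.abs.const_mul h
  have i12 : Integrable (fun p => h ^ 2 * |g12 p|) := g12.integrable.abs.const_mul _
  obtain ⟨F, hF⟩ : ∃ F : ℝ × ℝ → ℝ,
      F = fun p => |g p| + h * |g1 p| + h * |g2 p| + h ^ 2 * |g12 p| := ⟨_, rfl⟩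
  have hFi : Integrable F := by
    rw [hF]; exact ((i0.add i1).add i2).add i12
  have hF0 : ∀ p, 0 ≤ F p := by
    intro p; rw [hF]; positivity
  have htot : ∫ p, F p = (∫ t, |g t|) + h * ((∫ t, |g1 t|) + ∫ t, |g2 t|)
      + h ^ 2 * ∫ t, |g12 t| := by
    have : ∫ p, F p = ∫ p, (|g p| + h * |g1 p| + h * |g2 p| + h ^ 2 * |g12 p|) := by rw [hF]
    have i01 : Integrable (fun p => |g p| + h * |g1 p|) := i0.add i1
    have i012 : Integrable (fun p => |g p| + h * |g1 p| + h * |g2 p|) := i01.add i2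
    rw [this, integral_add i012 i12, integral_add i01 i2,
      integral_add i0 i1, integral_const_mul, integral_const_mul, integral_const_mul]
    ring
  rw [← inv_pow, ← hdef, ← htot, ← tsum_mul_left]
  apply Real.tsum_le_of_sum_le
  · intro n
    show 0 ≤ h ^ 2 * _
    positivity
  intro S
  let Q : ℕ × ℕ → Set (ℝ × ℝ) := fun n =>
    Set.Ioc (x.1 - n.1 * h - h) (x.1 - n.1 * h) ×ˢ Set.Ioc (x.2 - n.2 * h - h) (x.2 - n.2 * h)
  calc ∑ n ∈ S, h ^ 2 * |g (x.1 - n.1 / lam, x.2 - n.2 / lam)|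
      ≤ ∑ n ∈ S, ∫ p in Q n, F p := by
        apply Finset.sum_le_sum
        intro n _
        rw [div_eq_mul_inv, div_eq_mul_inv]
        exact aux_two g g1 g2 g12 (aux_hd1 g) (aux_hd2 g) (aux_hd1 g2) F h hh hF hFi _ _
    _ = ∫ p in ⋃ n ∈ S, Q n, F p := by
        rw [integral_biUnion_finset]
        · intro n _
          exact measurableSet_Ioc.prod measurableSet_Ioc
        · intro m _ n _ hmn
          show Disjoint (Q m) (Q n)
          rw [Set.disjoint_prod]
          by_cases h1 : m.1 = n.1
          · right
            exact aux_disj _ _ hh _ _ fun h2 => hmn (Prod.ext h1 h2)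
          · left
            exact aux_disj _ _ hh _ _ h1
        · intro n _
          exact hFi.integrableOn
    _ ≤ ∫ p, F p :=
        setIntegral_le_integral hFi (Filter.Eventually.of_forall hF0)
end

section
/- Let r ≥ 1, let h : ℤ → ℝ be a feedback filter supported on {1,…,L} satisfying the order-r vanishing moment conditions, with filter constant C_h = Σ_{j=1}^L h_j j^r, and let Φ : ℝ → ℝ be a Schwartz function. Then there exists a constant C′ ≥ 0, depending only on Φ, h, and r, such that: for every bounded input y : ℕ → ℝ, if the state sequence v of the 1-bit ΣΔ quantizer (v_n = 0 for n < 0; for n ≥ 0, q_n = sign((h∗v)_n + y_n), v_n = (h∗v)_n + y_n − q_n with (h∗v)_n = Σ_{j=1}^L h_j v_{n−j}) satisfies |v_n| ≤ V for all n, then for every λ ≥ 1 and every x ∈ ℝ, |f_λ(x) − f_q(x)| ≤ λ^{−r} V ( |C_h| ‖Φ^{(r)}‖_{L¹(ℝ)} / r! + C′ λ^{−1} ), where f_λ(x) = λ^{−1} Σ_{n∈ℕ} y_n Φ(x − n/λ) and f_q(x) = λ^{−1} Σ_{n∈ℕ} q_n Φ(x − n/λ). -/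
open MeasureTheory

lemma sd_schwartz_iter (Φ : SchwartzMap ℝ ℝ) (k : ℕ) :
    ∃ Ψ : SchwartzMap ℝ ℝ, (⇑Ψ) = iteratedDeriv k (⇑Φ) := by
  induction k with
  | zero => exact ⟨Φ, by simp⟩
  | succ k ih =>
    obtain ⟨Ψ, hΨ⟩ := ih
    refine ⟨SchwartzMap.derivCLM ℝ ℝ Ψ, ?_⟩
    funext x
    rw [SchwartzMap.derivCLM_apply, iteratedDeriv_succ, hΨ]

lemma sd_sum_int (F : ℝ → ℝ) (hF : Integrable F) (h0 : ∀ t, 0 ≤ F t) (x δ : ℝ) (hδ : 0 < δ)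
    (N : ℕ) :
    ∑ n ∈ Finset.range N, ∫ t in (x - n * δ - δ)..(x - n * δ), F t ≤ ∫ t, F t := by
  have h1 := intervalIntegral.sum_integral_adjacent_intervals (f := F) (μ := volume)
    (a := fun n : ℕ => x - n * δ) (n := N) (fun k _ => hF.intervalIntegrable)
  have h2 : ∑ n ∈ Finset.range N, ∫ t in (x - n * δ - δ)..(x - n * δ), F t
      = ∫ t in (x - N * δ)..x, F t := by
    rw [intervalIntegral.integral_symm]
    simp only [Nat.cast_zero, zero_mul, sub_zero] at h1
    rw [← h1, ← Finset.sum_neg_distrib]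
    refine Finset.sum_congr rfl fun n _ => ?_
    rw [intervalIntegral.integral_symm]
    congr 2
    push_cast; ring
  rw [h2, intervalIntegral.integral_of_le (by nlinarith [Nat.cast_nonneg (α := ℝ) N])]
  exact setIntegral_le_integral hF (Filter.Eventually.of_forall h0)

/-- window of length `j δ` -/
lemma sd_sum_int_window (F : ℝ → ℝ) (hF : Integrable F) (h0 : ∀ t, 0 ≤ F t) (x δ : ℝ)
    (hδ : 0 < δ) (N j : ℕ) :
    ∑ n ∈ Finset.range N, ∫ t in (x - n * δ - j * δ)..(x - n * δ), F t ≤ j * ∫ t, F t := by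
  induction j with
  | zero => simp
  | succ j ih =>
    have h1 := sd_sum_int F hF h0 (x - j * δ) δ hδ N
    have : ∑ n ∈ Finset.range N, ∫ t in (x - n * δ - (j + 1 : ℕ) * δ)..(x - n * δ), F t
      = (∑ n ∈ Finset.range N, ∫ t in (x - j * δ - n * δ - δ)..(x - j * δ - n * δ), F t)
      + ∑ n ∈ Finset.range N, ∫ t in (x - n * δ - j * δ)..(x - n * δ), F t := by
      rw [← Finset.sum_add_distrib]
      refine Finset.sum_congr rfl fun n _ => ?_
      have e1 : x - n * δ - (j + 1 : ℕ) * δ = x - j * δ - n * δ - δ := by push_cast; ring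
      have e2 : x - n * δ - j * δ = x - j * δ - n * δ := by ring
      rw [e1, e2, intervalIntegral.integral_add_adjacent_intervals hF.intervalIntegrable
        hF.intervalIntegrable]
    rw [this]
    push_cast
    linarith

lemma sd_riemann (Ψ : SchwartzMap ℝ ℝ) (x δ : ℝ) (hδ : 0 < δ) (N : ℕ) :
    δ * ∑ n ∈ Finset.range N, |Ψ (x - n * δ)| ≤ (∫ t, |Ψ t|) + δ * ∫ t, |deriv Ψ t| := by
  have hi : Integrable (fun t => |Ψ t|) := Ψ.integrable.abs
  have hi' : Integrable (deriv Ψ) := (SchwartzMap.derivCLM ℝ ℝ Ψ).integrable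
  have hI : Integrable (fun t => |deriv Ψ t|) := hi'.abs
  have key : ∀ t : ℝ, δ * |Ψ t| ≤ (∫ s in (t - δ)..t, |Ψ s|) + δ * ∫ s in (t - δ)..t, |deriv Ψ s| := by
    intro t
    have hpt : ∀ s ∈ Set.Icc (t - δ) t, |Ψ t| ≤ |Ψ s| + ∫ s in (t - δ)..t, |deriv Ψ s| := by
      intro s hs
      have h1 : ∫ u in s..t, deriv Ψ u = Ψ t - Ψ s :=
        intervalIntegral.integral_deriv_eq_sub (fun u _ => Ψ.differentiableAt)
          hi'.intervalIntegrable
      have h2 : |∫ u in s..t, deriv Ψ u| ≤ ∫ u in s..t, |deriv Ψ u| :=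
        intervalIntegral.abs_integral_le_integral_abs hs.2
      have h3 : ∫ u in s..t, |deriv Ψ u| ≤ ∫ u in (t - δ)..t, |deriv Ψ u| :=
        intervalIntegral.integral_mono_interval hs.1 hs.2 le_rfl
          (Filter.Eventually.of_forall fun _ => abs_nonneg _) hI.intervalIntegrable
      have h4 : |Ψ t| ≤ |Ψ s| + |Ψ t - Ψ s| := by
        have := abs_add_le (Ψ s) (Ψ t - Ψ s); simpa using this
      rw [h1] at h2
      linarith
    have := intervalIntegral.integral_mono_on (a := t - δ) (b := t) (μ := volume) (by linarith)
      (f := fun _ => |Ψ t|) (g := fun s => |Ψ s| + ∫ s in (t - δ)..t, |deriv Ψ s|)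
      intervalIntegrable_const (hi.intervalIntegrable.add intervalIntegrable_const) hpt
    rw [intervalIntegral.integral_add hi.intervalIntegrable intervalIntegrable_const] at this
    simpa using this
  calc δ * ∑ n ∈ Finset.range N, |Ψ (x - n * δ)|
      ≤ ∑ n ∈ Finset.range N, ((∫ s in (x - n * δ - δ)..(x - n * δ), |Ψ s|)
          + δ * ∫ s in (x - n * δ - δ)..(x - n * δ), |deriv Ψ s|) := by
        rw [Finset.mul_sum]; exact Finset.sum_le_sum fun n _ => key _
    _ ≤ _ := by
        rw [Finset.sum_add_distrib, ← Finset.mul_sum]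
        have h1 := sd_sum_int _ hi (fun _ => abs_nonneg _) x δ hδ N
        have h2 := sd_sum_int _ hI (fun _ => abs_nonneg _) x δ hδ N
        gcongr

lemma sd_summable (Ψ : SchwartzMap ℝ ℝ) (x δ : ℝ) (hδ : 0 < δ) (w : ℕ → ℝ) (B : ℝ)
    (hw : ∀ n, |w n| ≤ B) : Summable (fun n : ℕ => w n * Ψ (x - n * δ)) := by
  have h1 : Summable (fun n : ℕ => |Ψ (x - n * δ)|) := by
    refine summable_of_sum_range_le (c := ((∫ t, |Ψ t|) + δ * ∫ t, |deriv Ψ t|) / δ)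
      (fun _ => abs_nonneg _) fun N => ?_
    rw [le_div_iff₀ hδ, mul_comm]
    exact sd_riemann Ψ x δ hδ N
  refine Summable.of_norm_bounded (h1.mul_left B) fun n => ?_
  rw [Real.norm_eq_abs, abs_mul]
  exact mul_le_mul_of_nonneg_right (hw n) (abs_nonneg _)

/-- Taylor remainder -/
lemma sd_taylor (Φ : SchwartzMap ℝ ℝ) (r : ℕ) (t s : ℝ) (hs : 0 ≤ s) :
    |Φ (t - s) - ∑ k ∈ Finset.range (r + 1),
        ((k.factorial : ℝ)⁻¹ * (-s) ^ k) * iteratedDeriv k Φ t|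
      ≤ s ^ r / r.factorial * ∫ u in (t - s)..t, |iteratedDeriv (r + 1) Φ u| := by
  have hc : ∀ n : ℕ, ContDiff ℝ n Φ := fun n => Φ.smooth n
  have hd : ∀ u : ℝ, HasDerivAt (fun u => taylorWithinEval Φ r Set.univ u (t - s))
      (((r.factorial : ℝ)⁻¹ * (t - s - u) ^ r) * iteratedDeriv (r + 1) Φ u) u := by
    intro u
    have := hasDerivWithinAt_taylorWithinEval (f := Φ) (x := t - s) (y := u) (n := r)
      (s := Set.univ) (s' := Set.univ) uniqueDiffOn_univ Filter.univ_mem (Set.mem_univ _)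
      subset_rfl (hc r).contDiffOn (by
        rw [iteratedDerivWithin_univ]
        obtain ⟨Ψ, hΨ⟩ := sd_schwartz_iter Φ r
        rw [← hΨ]
        exact Ψ.differentiableAt.differentiableWithinAt)
    simpa [iteratedDerivWithin_univ] using this
  have hcont : Continuous (iteratedDeriv (r + 1) Φ) := by
    obtain ⟨Ψ, hΨ⟩ := sd_schwartz_iter Φ (r + 1)
    rw [← hΨ]; exact Ψ.continuous
  have hcont2 : Continuous fun u => ((r.factorial : ℝ)⁻¹ * (t - s - u) ^ r) * iteratedDeriv (r + 1) Φ u := by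
    fun_prop
  have hint := intervalIntegral.integral_eq_sub_of_hasDerivAt (a := t - s) (b := t)
    (fun u _ => hd u) (hcont2.intervalIntegrable _ _)
  rw [taylorWithinEval_self, taylor_within_apply] at hint
  simp only [iteratedDerivWithin_univ, smul_eq_mul, sub_sub_cancel_left] at hint
  rw [abs_sub_comm, ← hint]
  refine (intervalIntegral.abs_integral_le_integral_abs (by linarith)).trans ?_
  rw [← intervalIntegral.integral_const_mul]
  refine intervalIntegral.integral_mono_on (by linarith) (hcont2.abs.intervalIntegrable _ _)
    ((continuous_const.mul hcont.abs).intervalIntegrable _ _) fun u hu => ?_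
  rw [abs_mul, abs_mul, abs_pow, abs_inv, Nat.abs_cast, inv_mul_eq_div]
  have : |t - s - u| ≤ s := by rw [abs_le]; constructor <;> linarith [hu.1, hu.2]
  gcongr

lemma sd_D (r L : ℕ) (hr : 1 ≤ r) (h : ℤ → ℝ)
    (hm0 : ∑ j ∈ Finset.Icc (1 : ℤ) (L : ℤ), h j = 1)
    (hmk : ∀ k : ℕ, 1 ≤ k → k < r →
      ∑ j ∈ Finset.Icc (1 : ℤ) (L : ℤ), h j * (j : ℝ) ^ k = 0)
    (Φ : SchwartzMap ℝ ℝ) (δ : ℝ) (hδ : 0 < δ) (t : ℝ) :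
    |Φ t - ∑ j ∈ Finset.Icc (1 : ℤ) (L : ℤ), h j * Φ (t - j * δ)|
      ≤ δ ^ r * (|∑ j ∈ Finset.Icc (1 : ℤ) (L : ℤ), h j * (j : ℝ) ^ r| / r.factorial
            * |iteratedDeriv r Φ t|
          + ∑ j ∈ Finset.Icc (1 : ℤ) (L : ℤ), |h j| * (j : ℝ) ^ r / r.factorial *
            ∫ u in (t - j * δ)..t, |iteratedDeriv (r + 1) Φ u|) := by
  set S := Finset.Icc (1 : ℤ) (L : ℤ) with hS
  set T : ℤ → ℝ := fun j => ∑ k ∈ Finset.range (r + 1),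
        ((k.factorial : ℝ)⁻¹ * (-(j * δ)) ^ k) * iteratedDeriv k Φ t with hT
  have hpoly : ∑ j ∈ S, h j * T j = Φ t +
      (r.factorial : ℝ)⁻¹ * (-δ) ^ r * iteratedDeriv r Φ t * ∑ j ∈ S, h j * (j : ℝ) ^ r := by
    have h1 : ∑ j ∈ S, h j * T j = ∑ k ∈ Finset.range (r + 1),
        (k.factorial : ℝ)⁻¹ * (-δ) ^ k * iteratedDeriv k Φ t * ∑ j ∈ S, h j * (j : ℝ) ^ k := by
      simp only [hT, Finset.mul_sum]
      rw [Finset.sum_comm]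
      refine Finset.sum_congr rfl fun k _ => Finset.sum_congr rfl fun j _ => ?_
      rw [show -((j : ℝ) * δ) = (-δ) * j by ring, mul_pow]
      ring
    rw [h1, Finset.sum_range_succ]
    congr 1
    rw [Finset.sum_eq_single_of_mem 0 (Finset.mem_range.2 hr)]
    · simp [hm0]
    · intro k hk hk0
      rw [hmk k (Nat.one_le_iff_ne_zero.2 hk0) (Finset.mem_range.1 hk), mul_zero]
  have hdec : Φ t - ∑ j ∈ S, h j * Φ (t - j * δ)
      = -((r.factorial : ℝ)⁻¹ * (-δ) ^ r * iteratedDeriv r Φ t * ∑ j ∈ S, h j * (j : ℝ) ^ r)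
        - ∑ j ∈ S, h j * (Φ (t - j * δ) - T j) := by
    simp only [mul_sub, Finset.sum_sub_distrib]
    rw [hpoly]; ring
  rw [hdec, mul_add]
  refine (abs_sub _ _).trans (add_le_add (le_of_eq ?_) ?_)
  · rw [abs_neg, abs_mul, abs_mul, abs_mul, abs_inv, Nat.abs_cast, abs_pow, abs_neg,
      abs_of_pos hδ]
    ring
  · refine (Finset.abs_sum_le_sum_abs _ _).trans ?_
    rw [Finset.mul_sum]
    refine Finset.sum_le_sum fun j hj => ?_
    have hj0 : (0 : ℝ) ≤ j := by
      have := (Finset.mem_Icc.1 hj).1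
      exact_mod_cast (by omega : (0 : ℤ) ≤ j)
    have := sd_taylor Φ r t (j * δ) (by positivity)
    rw [abs_mul]
    refine (mul_le_mul_of_nonneg_left this (abs_nonneg _)).trans (le_of_eq ?_)
    rw [mul_pow]; ring

lemma sd_D_sum (r L : ℕ) (hr : 1 ≤ r) (h : ℤ → ℝ)
    (hm0 : ∑ j ∈ Finset.Icc (1 : ℤ) (L : ℤ), h j = 1)
    (hmk : ∀ k : ℕ, 1 ≤ k → k < r →
      ∑ j ∈ Finset.Icc (1 : ℤ) (L : ℤ), h j * (j : ℝ) ^ k = 0)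
    (Φ : SchwartzMap ℝ ℝ) (δ : ℝ) (hδ : 0 < δ) (x : ℝ) (N : ℕ) :
    δ * ∑ n ∈ Finset.range N, |Φ (x - n * δ)
        - ∑ j ∈ Finset.Icc (1 : ℤ) (L : ℤ), h j * Φ (x - n * δ - j * δ)|
      ≤ δ ^ r * (|∑ j ∈ Finset.Icc (1 : ℤ) (L : ℤ), h j * (j : ℝ) ^ r| / r.factorial
            * ((∫ t, |iteratedDeriv r Φ t|) + δ * ∫ t, |iteratedDeriv (r + 1) Φ t|)
          + δ * ∑ j ∈ Finset.Icc (1 : ℤ) (L : ℤ), |h j| * (j : ℝ) ^ r / r.factorial *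
            (j * ∫ u, |iteratedDeriv (r + 1) Φ u|)) := by
  set S := Finset.Icc (1 : ℤ) (L : ℤ) with hS
  have hrie : δ * ∑ n ∈ Finset.range N, |iteratedDeriv r Φ (x - n * δ)|
      ≤ (∫ t, |iteratedDeriv r Φ t|) + δ * ∫ t, |iteratedDeriv (r + 1) Φ t| := by
    obtain ⟨Ψ, hΨ⟩ := sd_schwartz_iter Φ r
    rw [iteratedDeriv_succ, ← hΨ]
    exact sd_riemann Ψ x δ hδ N
  have hint : Integrable (fun t => |iteratedDeriv (r + 1) Φ t|) := by
    obtain ⟨Ψ, hΨ⟩ := sd_schwartz_iter Φ (r + 1)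
    rw [← hΨ]
    exact Ψ.integrable.abs
  calc δ * ∑ n ∈ Finset.range N, |Φ (x - n * δ) - ∑ j ∈ S, h j * Φ (x - n * δ - j * δ)|
      ≤ δ * ∑ n ∈ Finset.range N, δ ^ r * (|∑ j ∈ S, h j * (j : ℝ) ^ r| / r.factorial
            * |iteratedDeriv r Φ (x - n * δ)|
          + ∑ j ∈ S, |h j| * (j : ℝ) ^ r / r.factorial *
            ∫ u in (x - n * δ - j * δ)..(x - n * δ), |iteratedDeriv (r + 1) Φ u|) := by
        gcongr with n _
        exact sd_D r L hr h hm0 hmk Φ δ hδ _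
    _ = δ ^ r * (|∑ j ∈ S, h j * (j : ℝ) ^ r| / r.factorial
            * (δ * ∑ n ∈ Finset.range N, |iteratedDeriv r Φ (x - n * δ)|)
          + δ * ∑ j ∈ S, |h j| * (j : ℝ) ^ r / r.factorial *
            ∑ n ∈ Finset.range N,
              ∫ u in (x - n * δ - j * δ)..(x - n * δ), |iteratedDeriv (r + 1) Φ u|) := by
        rw [← Finset.mul_sum, Finset.sum_add_distrib, ← Finset.mul_sum, Finset.sum_comm]
        simp only [← Finset.mul_sum]
        ring
    _ ≤ _ := by
        gcongr with j hj
        · have := (Finset.mem_Icc.1 hj).1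
          have hj0 : (0 : ℝ) ≤ j := by exact_mod_cast (by omega : (0 : ℤ) ≤ j)
          positivity
        · obtain ⟨m, rfl⟩ := Int.eq_ofNat_of_zero_le
            (by have := (Finset.mem_Icc.1 hj).1; omega : (0 : ℤ) ≤ j)
          have := sd_sum_int_window _ hint (fun _ => abs_nonneg _) x δ hδ N m
          simpa using this

lemma sd_shift (Φ : SchwartzMap ℝ ℝ) (x δ : ℝ) (hδ : 0 < δ) (v : ℤ → ℝ) (V : ℝ)
    (hv : ∀ n : ℤ, n < 0 → v n = 0) (hV : ∀ n : ℤ, |v n| ≤ V) (j : ℤ) (hj : 1 ≤ j) :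
    ∑' n : ℕ, v ((n : ℤ) - j) * Φ (x - n * δ) = ∑' n : ℕ, v n * Φ (x - n * δ - j * δ) := by
  obtain ⟨m, rfl⟩ := Int.eq_ofNat_of_zero_le (by omega : (0 : ℤ) ≤ j)
  have hs := sd_summable Φ x δ hδ (fun n : ℕ => v ((n : ℤ) - m)) V (fun n => hV _)
  rw [← hs.sum_add_tsum_nat_add m, Finset.sum_eq_zero, zero_add]
  · refine tsum_congr fun n => ?_
    congr 2
    · congr 1; push_cast; ring
    · push_cast; ring
  · intro i hi
    have := Finset.mem_range.1 hi
    rw [hv _ (by omega), zero_mul]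

/-- Error bound for the one-dimensional `r`-th order 1-bit ΣΔ quantizer: there is a
constant `C′` depending only on `Φ`, `h`, `r` such that whenever the state variable is
bounded by `V`, for all `λ ≥ 1` and `x ∈ ℝ`,
`|f_λ(x) − f_q(x)| ≤ λ^{−r} V (|C_h| ‖Φ^{(r)}‖_{L¹}/r! + C′ λ⁻¹)`. -/
theorem stmt_11 (r L : ℕ) (hr : 1 ≤ r) (h : ℤ → ℝ)
    (hcausal : ∀ n : ℤ, n ≤ 0 → h n = 0)
    (hsupp : ∀ n : ℤ, (L : ℤ) < n → h n = 0)
    (hm0 : ∑ j ∈ Finset.Icc (1 : ℤ) (L : ℤ), h j = 1)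
    (hmk : ∀ k : ℕ, 1 ≤ k → k < r →
      ∑ j ∈ Finset.Icc (1 : ℤ) (L : ℤ), h j * (j : ℝ) ^ k = 0)
    (Φ : SchwartzMap ℝ ℝ) :
    ∃ C' : ℝ, 0 ≤ C' ∧
      ∀ (y : ℕ → ℝ), (∃ B : ℝ, ∀ n : ℕ, |y n| ≤ B) →
      ∀ (v : ℤ → ℝ) (q : ℕ → ℝ),
        (∀ n : ℤ, n < 0 → v n = 0) →
        (∀ n : ℕ, q n =
          sgn ((∑ j ∈ Finset.Icc (1 : ℤ) (L : ℤ), h j * v ((n : ℤ) - j)) + y n)) →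
        (∀ n : ℕ, v (n : ℤ) =
          (∑ j ∈ Finset.Icc (1 : ℤ) (L : ℤ), h j * v ((n : ℤ) - j)) + y n - q n) →
      ∀ V : ℝ, (∀ n : ℤ, |v n| ≤ V) →
      ∀ lam : ℝ, 1 ≤ lam → ∀ x : ℝ,
        |lam⁻¹ * (∑' n : ℕ, y n * Φ (x - n / lam))
            - lam⁻¹ * (∑' n : ℕ, q n * Φ (x - n / lam))|
          ≤ (lam ^ r)⁻¹ * V *
              (|∑ j ∈ Finset.Icc (1 : ℤ) (L : ℤ), h j * (j : ℝ) ^ r| *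
                  (∫ t : ℝ, |iteratedDeriv r (⇑Φ) t|) / r.factorial
                + C' * lam⁻¹) := by
  
  set S := Finset.Icc (1 : ℤ) (L : ℤ) with hS
  set J := ∫ t, |iteratedDeriv (r + 1) (⇑Φ) t| with hJ
  have hJ0 : 0 ≤ J := integral_nonneg fun _ => abs_nonneg _
  have hSnn : ∀ j ∈ S, (0 : ℝ) ≤ j := fun j hj => by
    have := (Finset.mem_Icc.1 hj).1
    exact_mod_cast (by omega : (0 : ℤ) ≤ j)
  refine ⟨|∑ j ∈ S, h j * (j : ℝ) ^ r| / r.factorial * J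
    + ∑ j ∈ S, |h j| * (j : ℝ) ^ r / r.factorial * (j * J), ?_, ?_⟩
  · refine add_nonneg (by positivity) (Finset.sum_nonneg fun j hj => ?_)
    have := hSnn j hj
    positivity
  rintro y ⟨B, hB⟩ v q hv hq hrec V hV lam hlam x
  have hδ : 0 < lam⁻¹ := by positivity
  simp only [div_eq_mul_inv (_ : ℝ) lam, ← inv_pow]
  set δ := lam⁻¹ with hδdef
  have hV0 : 0 ≤ V := (abs_nonneg _).trans (hV 0)
  have hq1 : ∀ n, |q n| ≤ 1 := by
    intro n
    rw [hq n, sgn]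
    split_ifs <;> simp
  have hsy := sd_summable Φ x δ hδ y B hB
  have hsq := sd_summable Φ x δ hδ q 1 hq1
  have hsv := sd_summable Φ x δ hδ (fun n : ℕ => v n) V (fun n => hV _)
  have hsj : ∀ j : ℤ, Summable fun n : ℕ => v ((n : ℤ) - j) * Φ (x - n * δ) := fun j =>
    sd_summable Φ x δ hδ (fun n : ℕ => v ((n : ℤ) - j)) V (fun n => hV _)
  have hsj2 : ∀ j : ℤ, Summable fun n : ℕ => v n * Φ (x - n * δ - j * δ) := fun j => by
    have := sd_summable Φ (x - j * δ) δ hδ (fun n : ℕ => v n) V (fun n => hV _)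
    refine this.congr fun n => ?_
    congr 2; ring
  have hD : HasSum (fun n : ℕ => v n * (Φ (x - n * δ) - ∑ j ∈ S, h j * Φ (x - n * δ - j * δ)))
      (∑' n : ℕ, y n * Φ (x - n * δ) - ∑' n : ℕ, q n * Φ (x - n * δ)) := by
    have e1 : ∑' n : ℕ, y n * Φ (x - n * δ) - ∑' n : ℕ, q n * Φ (x - n * δ)
        = ∑' n : ℕ, v n * Φ (x - n * δ)
          - ∑ j ∈ S, h j * ∑' n : ℕ, v n * Φ (x - n * δ - j * δ) := by
      have e2 : ∑ j ∈ S, h j * ∑' n : ℕ, v n * Φ (x - n * δ - j * δ)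
          = ∑' n : ℕ, ∑ j ∈ S, h j * (v ((n : ℤ) - j) * Φ (x - n * δ)) := by
        rw [Summable.tsum_finsetSum fun j _ => (hsj j).mul_left _]
        refine Finset.sum_congr rfl fun j hj => ?_
        rw [tsum_mul_left, sd_shift Φ x δ hδ v V hv hV j (Finset.mem_Icc.1 hj).1]
      rw [e2, ← hsy.tsum_sub hsq,
        ← hsv.tsum_sub (summable_sum fun j _ => (hsj j).mul_left _)]
      refine tsum_congr fun n => ?_
      rw [hrec n]
      simp only [← mul_assoc, ← Finset.sum_mul]
      ring
    rw [e1]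
    have h3 := hsv.hasSum.sub (hasSum_sum (s := S) fun j _ => ((hsj2 j).hasSum.mul_left (h j)))
    refine h3.congr_fun ?_
    intro n
    rw [mul_sub, Finset.mul_sum]
    congr 1
    refine Finset.sum_congr rfl fun j _ => ?_
    ring
  rw [← mul_sub]
  have hlim := (hD.tendsto_sum_nat.const_mul δ).abs
  refine le_of_tendsto hlim (Filter.Eventually.of_forall fun N => ?_)
  have hN := sd_D_sum r L hr h hm0 hmk Φ δ hδ x N
  calc |δ * ∑ n ∈ Finset.range N,
          v n * (Φ (x - n * δ) - ∑ j ∈ S, h j * Φ (x - n * δ - j * δ))|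
      ≤ δ * ∑ n ∈ Finset.range N,
          V * |Φ (x - n * δ) - ∑ j ∈ S, h j * Φ (x - n * δ - j * δ)| := by
        rw [abs_mul, abs_of_pos hδ]
        refine mul_le_mul_of_nonneg_left ((Finset.abs_sum_le_sum_abs _ _).trans
          (Finset.sum_le_sum fun n _ => ?_)) hδ.le
        rw [abs_mul]
        exact mul_le_mul_of_nonneg_right (hV _) (abs_nonneg _)
    _ = V * (δ * ∑ n ∈ Finset.range N,
          |Φ (x - n * δ) - ∑ j ∈ S, h j * Φ (x - n * δ - j * δ)|) := by
        rw [← Finset.mul_sum]; ring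
    _ ≤ _ := (mul_le_mul_of_nonneg_left hN hV0).trans (le_of_eq (by ring))
end

section
/- Let r ≥ 1, let h : ℤ → ℝ be a feedback filter supported on {1,…,L}, let Φ : ℝ → ℝ be a Schwartz function, and for a ∈ ℝ let R_{a,r}(t) = Φ(a+t) − Σ_{p=0}^r (t^p/p!) Φ^{(p)}(a) be the r-th order Taylor remainder of Φ at a. Let v : ℕ → ℝ satisfy |v_n| ≤ V for all n. Then for every λ > 0 and every x ∈ ℝ, | λ^{−1} Σ_{n∈ℕ} v_n Σ_{j=1}^L h_j R_{x−n/λ, r}(−j/λ) | ≤ V λ^{−(r+1)} ( Σ_{j=1}^L |h_j| j^{r+1} ) / (r+1)! · ( ‖Φ^{(r+1)}‖_{L¹(ℝ)} + λ^{−1} ‖Φ^{(r+2)}‖_{L¹(ℝ)} ). -/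
open MeasureTheory

lemma aux_sum_int (f : ℝ → ℝ) (hf : Integrable f) (y d : ℝ) (N : ℕ) :
    ∑ n ∈ Finset.range N, ∫ t in (y - n * d)..(y - n * d + d), f t
      = ∫ t in (y + d - N * d)..(y + d), f t := by
  induction N with
  | zero => simp
  | succ N ih =>
    rw [Finset.sum_range_succ, ih, add_comm]
    have e1 : y - (N : ℝ) * d + d = y + d - N * d := by ring
    have e2 : y + d - ((N + 1 : ℕ) : ℝ) * d = y - N * d := by push_cast; ring
    rw [e1, e2]
    exact intervalIntegral.integral_add_adjacent_intervals
      hf.intervalIntegrable hf.intervalIntegrable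

lemma aux_sum_int_le (f : ℝ → ℝ) (hf : Integrable f) (h0 : ∀ t, 0 ≤ f t) (y d : ℝ) (hd : 0 < d)
    (N : ℕ) :
    ∑ n ∈ Finset.range N, ∫ t in (y - n * d)..(y - n * d + d), f t ≤ ∫ t, f t := by
  rw [aux_sum_int f hf, intervalIntegral.integral_of_le]
  · exact setIntegral_le_integral hf (Filter.Eventually.of_forall h0)
  · have : 0 ≤ (N : ℝ) * d := by positivity
    linarith

lemma aux_point (g g' : ℝ → ℝ) (hg : ∀ t, HasDerivAt g (g' t) t) (hc' : Continuous g')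
    (a d : ℝ) (hd : 0 < d) :
    |g a| ≤ d⁻¹ * (∫ t in a..(a + d), |g t|) + ∫ t in a..(a + d), |g' t| := by
  have hc : Continuous g := continuous_iff_continuousAt.2 fun t => (hg t).continuousAt
  set D := ∫ t in a..(a + d), |g' t| with hD
  have key : ∀ t ∈ Set.Icc a (a + d), |g a| ≤ |g t| + D := by
    intro t ht
    have h1 : ∫ u in a..t, g' u = g t - g a :=
      intervalIntegral.integral_eq_sub_of_hasDerivAt (fun u _ => hg u)
        (hc'.intervalIntegrable _ _)
    have h2 : |∫ u in a..t, g' u| ≤ ∫ u in a..t, |g' u| :=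
      intervalIntegral.abs_integral_le_integral_abs ht.1
    have h3 : ∫ u in a..t, |g' u| ≤ D := by
      apply intervalIntegral.integral_mono_interval le_rfl ht.1 ht.2
      · exact Filter.Eventually.of_forall fun u => abs_nonneg _
      · exact hc'.abs.intervalIntegrable _ _
    have h4 : |g a| ≤ |g t| + |g t - g a| := by
      have := abs_sub_abs_le_abs_sub (g a) (g t)
      rw [abs_sub_comm] at this
      linarith
    rw [h1] at h2
    linarith
  have hI : ∫ t in a..(a + d), |g a| ≤ ∫ t in a..(a + d), (|g t| + D) := by
    apply intervalIntegral.integral_mono_on (by linarith)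
    · exact continuous_const.intervalIntegrable _ _
    · exact (hc.abs.add continuous_const).intervalIntegrable _ _
    · exact key
  rw [intervalIntegral.integral_add (hc.abs.intervalIntegrable _ _)
    (continuous_const.intervalIntegrable _ _)] at hI
  simp only [intervalIntegral.integral_const, add_sub_cancel_left, smul_eq_mul] at hI
  have : |g a| = d⁻¹ * (d * |g a|) := by field_simp
  rw [this]
  calc d⁻¹ * (d * |g a|) ≤ d⁻¹ * ((∫ t in a..(a + d), |g t|) + d * D) := by gcongr
    _ = _ := by field_simp

lemma aux_sample (g g' : ℝ → ℝ) (hg : ∀ t, HasDerivAt g (g' t) t) (hc' : Continuous g')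
    (hi : Integrable fun t => |g t|) (hi' : Integrable fun t => |g' t|)
    (y d : ℝ) (hd : 0 < d) (N : ℕ) :
    ∑ n ∈ Finset.range N, |g (y - n * d)| ≤ d⁻¹ * (∫ t, |g t|) + ∫ t, |g' t| := by
  calc _ ≤ ∑ n ∈ Finset.range N, (d⁻¹ * (∫ t in (y - n * d)..(y - n * d + d), |g t|)
          + ∫ t in (y - n * d)..(y - n * d + d), |g' t|) :=
        Finset.sum_le_sum fun n _ => aux_point g g' hg hc' _ d hd
    _ = d⁻¹ * (∑ n ∈ Finset.range N, ∫ t in (y - n * d)..(y - n * d + d), |g t|)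
          + ∑ n ∈ Finset.range N, ∫ t in (y - n * d)..(y - n * d + d), |g' t| := by
        rw [Finset.sum_add_distrib, Finset.mul_sum]
    _ ≤ _ := by
        gcongr
        · exact aux_sum_int_le _ hi (fun _ => abs_nonneg _) y d hd N
        · exact aux_sum_int_le _ hi' (fun _ => abs_nonneg _) y d hd N

lemma aux_taylor (r : ℕ) (Φ : ℝ → ℝ) (hΦ : ContDiff ℝ (r + 1 : ℕ) Φ) (a s : ℝ) (hs : 0 < s) :
    |taylorRem1 r Φ a (-s)| ≤
      ∫ u in (0 : ℝ)..s, (s - u) ^ r / r.factorial * |iteratedDeriv (r + 1) Φ (a - u)| := by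
  have hne : a ≠ a + -s := by intro h; linarith
  have hu : UniqueDiffOn ℝ (Set.uIcc a (a + -s)) := uniqueDiffOn_uIcc hne
  have h1 := taylor_integral_remainder (f := Φ) (x := a + -s) (x₀ := a) (n := r) hΦ.contDiffOn
  have h2 : Φ (a + -s) - taylorWithinEval Φ r (Set.uIcc a (a + -s)) a (a + -s)
      = taylorRem1 r Φ a (-s) := by
    rw [taylorRem1, taylor_within_apply]
    congr 1
    apply Finset.sum_congr rfl
    intro k hk
    rw [iteratedDerivWithin_eq_iteratedDeriv hu _ Set.left_mem_uIcc]
    · simp only [smul_eq_mul]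
      rw [add_sub_cancel_left]
      ring
    · refine hΦ.contDiffAt.of_le ?_
      have := Finset.mem_range.1 hk
      exact_mod_cast (by omega : k ≤ r + 1)
  have h3 : ∫ t in a..(a + -s), ((a + -s - t) ^ r / r.factorial) •
        iteratedDerivWithin (r + 1) Φ (Set.uIcc a (a + -s)) t
      = ∫ t in a..(a + -s), ((a + -s - t) ^ r / r.factorial) * iteratedDeriv (r + 1) Φ t := by
    apply intervalIntegral.integral_congr
    intro t ht
    simp only [smul_eq_mul]
    rw [iteratedDerivWithin_eq_iteratedDeriv hu hΦ.contDiffAt ht]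
  rw [h2, h3, intervalIntegral.integral_symm] at h1
  rw [h1, abs_neg]
  have h4 := intervalIntegral.integral_comp_sub_left (a := 0) (b := s)
    (fun t => ((a + -s - t) ^ r / r.factorial) * iteratedDeriv (r + 1) Φ t) a
  rw [sub_zero, sub_eq_add_neg] at h4
  rw [← h4]
  refine (intervalIntegral.abs_integral_le_integral_abs hs.le).trans (le_of_eq ?_)
  apply intervalIntegral.integral_congr
  intro u hu
  rw [Set.uIcc_of_le hs.le] at hu
  have hsu : 0 ≤ s - u := by linarith [hu.2]
  simp only
  have e : a + -s - (a - u) = -(s - u) := by ring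
  rw [e, abs_mul, abs_div, abs_pow, abs_neg, abs_of_nonneg hsu, Nat.abs_cast]

lemma aux_sum_taylor (r : ℕ) (Φ : SchwartzMap ℝ ℝ) (x d s : ℝ) (hd : 0 < d) (hs : 0 < s) (N : ℕ) :
    ∑ n ∈ Finset.range N, |taylorRem1 r (⇑Φ) (x - n * d) (-s)| ≤
      s ^ (r + 1) / (r + 1).factorial * (d⁻¹ * (∫ t, |iteratedDeriv (r + 1) (⇑Φ) t|)
        + ∫ t, |iteratedDeriv (r + 2) (⇑Φ) t|) := by
  set C := d⁻¹ * (∫ t, |iteratedDeriv (r + 1) (⇑Φ) t|)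
        + ∫ t, |iteratedDeriv (r + 2) (⇑Φ) t| with hC
  have hsm : ∀ k : ℕ, ContDiff ℝ k Φ := fun k => Φ.smooth k
  have hcont : ∀ k : ℕ, Continuous (iteratedDeriv k (⇑Φ)) := fun k =>
    (hsm k).continuous_iteratedDeriv k le_rfl
  have hintg : ∀ k : ℕ, Integrable fun t => |iteratedDeriv k (⇑Φ) t| := by
    intro k
    have := Φ.integrable_pow_mul_iteratedFDeriv volume 0 k
    simpa [norm_iteratedFDeriv_eq_norm_iteratedDeriv] using this
  have hder : ∀ t, HasDerivAt (iteratedDeriv (r + 1) (⇑Φ)) (iteratedDeriv (r + 2) (⇑Φ) t) t := by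
    intro t
    rw [iteratedDeriv_succ (n := r + 1)]
    apply DifferentiableAt.hasDerivAt
    exact ((hsm (r + 2)).differentiable_iteratedDeriv (r + 1)
      (by exact_mod_cast (by omega : r + 1 < r + 2))) t
  have hci : ∀ n : ℕ, IntervalIntegrable (fun u => (s - u) ^ r / r.factorial *
      |iteratedDeriv (r + 1) (⇑Φ) (x - n * d - u)|) volume 0 s := by
    intro n
    apply Continuous.intervalIntegrable
    have := hcont (r + 1)
    fun_prop
  calc _ ≤ ∑ n ∈ Finset.range N, ∫ u in (0 : ℝ)..s, (s - u) ^ r / r.factorial *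
            |iteratedDeriv (r + 1) (⇑Φ) (x - n * d - u)| :=
        Finset.sum_le_sum fun n _ => aux_taylor r Φ (hsm _) _ s hs
    _ = ∫ u in (0 : ℝ)..s, ∑ n ∈ Finset.range N, (s - u) ^ r / r.factorial *
            |iteratedDeriv (r + 1) (⇑Φ) (x - n * d - u)| :=
        (intervalIntegral.integral_finsetSum fun n _ => hci n).symm
    _ ≤ ∫ u in (0 : ℝ)..s, (s - u) ^ r / r.factorial * C := by
        apply intervalIntegral.integral_mono_on hs.le
        · apply Continuous.intervalIntegrable
          have := hcont (r + 1)
          fun_prop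
        · apply Continuous.intervalIntegrable
          fun_prop
        · intro u hu
          have hsu : 0 ≤ s - u := by linarith [hu.2]
          rw [← Finset.mul_sum]
          gcongr
          have := aux_sample _ _ hder (hcont _) (hintg _) (hintg _) (x - u) d hd N
          simpa only [sub_right_comm] using this
    _ = _ := by
        rw [intervalIntegral.integral_mul_const, intervalIntegral.integral_div,
          intervalIntegral.integral_comp_sub_left (fun u => u ^ r), integral_pow]
        rw [Nat.factorial_succ]
        push_cast
        rw [sub_zero, sub_self, zero_pow (Nat.succ_ne_zero r), sub_zero]
        field_simp


/-- Bound on the combined Taylor remainder term in the one-dimensional `r`-th order ΣΔ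
error analysis:
`|λ⁻¹ Σ_n v_n Σ_j h_j R_{x−n/λ,r}(−j/λ)|
  ≤ V λ^{−(r+1)} (Σ_j |h_j| j^{r+1})/(r+1)! (‖Φ^{(r+1)}‖_{L¹} + λ⁻¹ ‖Φ^{(r+2)}‖_{L¹})`. -/
theorem stmt_14 (r L : ℕ) (hr : 1 ≤ r) (h : ℤ → ℝ)
    (hcausal : ∀ n : ℤ, n ≤ 0 → h n = 0)
    (hsupp : ∀ n : ℤ, (L : ℤ) < n → h n = 0)
    (Φ : SchwartzMap ℝ ℝ) (v : ℕ → ℝ) (V : ℝ) (hvb : ∀ n : ℕ, |v n| ≤ V)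
    (lam : ℝ) (hlam : 0 < lam) (x : ℝ) :
    |lam⁻¹ * ∑' n : ℕ, v n * ∑ j ∈ Finset.Icc (1 : ℤ) (L : ℤ),
        h j * taylorRem1 r (⇑Φ) (x - n / lam) (-((j : ℝ) / lam))|
      ≤ V * (lam ^ (r + 1))⁻¹ *
          ((∑ j ∈ Finset.Icc (1 : ℤ) (L : ℤ), |h j| * (j : ℝ) ^ (r + 1)) /
            (r + 1).factorial) *
          ((∫ t : ℝ, |iteratedDeriv (r + 1) (⇑Φ) t|)
            + lam⁻¹ * ∫ t : ℝ, |iteratedDeriv (r + 2) (⇑Φ) t|) := by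
  set A := ∫ t : ℝ, |iteratedDeriv (r + 1) (⇑Φ) t| with hA
  set B := ∫ t : ℝ, |iteratedDeriv (r + 2) (⇑Φ) t| with hB
  have hV : 0 ≤ V := (abs_nonneg _).trans (hvb 0)
  have hd : 0 < lam⁻¹ := inv_pos.2 hlam
  set T : ℕ → ℝ := fun n => v n * ∑ j ∈ Finset.Icc (1 : ℤ) (L : ℤ),
        h j * taylorRem1 r (⇑Φ) (x - n / lam) (-((j : ℝ) / lam)) with hT
  set K := V * ∑ j ∈ Finset.Icc (1 : ℤ) (L : ℤ), |h j| *
    (((j : ℝ) / lam) ^ (r + 1) / (r + 1).factorial * (lam * A + B)) with hK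
  have hpart : ∀ N : ℕ, ∑ n ∈ Finset.range N, ‖T n‖ ≤ K := by
    intro N
    calc ∑ n ∈ Finset.range N, ‖T n‖
        ≤ ∑ n ∈ Finset.range N, V * ∑ j ∈ Finset.Icc (1 : ℤ) (L : ℤ),
          |h j| * |taylorRem1 r (⇑Φ) (x - n / lam) (-((j : ℝ) / lam))| := by
          apply Finset.sum_le_sum
          intro n _
          rw [Real.norm_eq_abs, hT, abs_mul]
          refine mul_le_mul (hvb n) ?_ (abs_nonneg _) hV
          refine (Finset.abs_sum_le_sum_abs _ _).trans (le_of_eq ?_)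
          simp only [abs_mul]
      _ = V * ∑ j ∈ Finset.Icc (1 : ℤ) (L : ℤ), |h j| * ∑ n ∈ Finset.range N,
          |taylorRem1 r (⇑Φ) (x - n / lam) (-((j : ℝ) / lam))| := by
          rw [← Finset.mul_sum, Finset.sum_comm]
          simp only [Finset.mul_sum]
      _ ≤ K := by
          rw [hK]
          gcongr with j hj
          have hj1 : (0 : ℝ) < j := by
            have := (Finset.mem_Icc.1 hj).1
            exact_mod_cast (by omega : (0 : ℤ) < j)
          have := aux_sum_taylor r Φ x lam⁻¹ ((j : ℝ) / lam) hd (by positivity) N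
          simpa only [inv_inv, ← div_eq_mul_inv] using this
  have hsum : Summable fun n => ‖T n‖ := summable_of_sum_range_le (fun _ => norm_nonneg _) hpart
  have h1 : |∑' n, T n| ≤ K :=
    (norm_tsum_le_tsum_norm hsum).trans
      (Real.tsum_le_of_sum_range_le (fun _ => norm_nonneg _) hpart)
  rw [abs_mul, abs_of_pos hd]
  refine (mul_le_mul_of_nonneg_left h1 hd.le).trans (le_of_eq ?_)
  have h2 : ∑ j ∈ Finset.Icc (1 : ℤ) (L : ℤ), |h j| *
      (((j : ℝ) / lam) ^ (r + 1) / (r + 1).factorial * (lam * A + B))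
      = (∑ j ∈ Finset.Icc (1 : ℤ) (L : ℤ), |h j| * (j : ℝ) ^ (r + 1)) *
        ((lam ^ (r + 1))⁻¹ / (r + 1).factorial * (lam * A + B)) := by
    rw [Finset.sum_mul]
    apply Finset.sum_congr rfl
    intro j _
    rw [div_pow]
    ring
  rw [hK, h2]
  field_simp
end

section
/- Let r ≥ 1 and let Φ : ℝ² → ℝ be a Schwartz function. Then there exists a constant C ≥ 0, depending only on Φ and r, with the following property. For every p, s, ℓ ∈ ℕ, every weight matrix w = (w_{i,j}), i ∈ {0,…,p}, j ∈ {−s,…,ℓ}, with w_{i,j} ≥ 0 and Σ_{i,j} w_{i,j} = 1, every family of feedback filters h^{i,j} supported on {1,…,L}, every v : ℕ² → ℝ with |v_n| ≤ V for all n, every λ ≥ 1 and every x ∈ ℝ²: | λ^{−2} Σ_{n∈ℕ²} v_n Σ_{i,j} w_{i,j} Σ_{k=1}^L h^{i,j}_k R_{x−n/λ, r}( −(k/λ) d_{i,j} ) | ≤ C V λ^{−(r+1)} · ( max_{i,j} Σ_{k=1}^L |h^{i,j}_k| k^{r+1} ) · ( Σ_{i,j} w_{i,j} Σ_{m=0}^{r+1}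 |i|^{r+1−m} |j|^m / ((r+1−m)! m!) ), where d_{i,j} = (i,j) and R_{a,r}(u) = Φ(a+u) − Σ_{ℓ'=0}^r Σ_{|α|=ℓ'} (u^α/α!) ∂^α Φ(a) is the r-th order Taylor remainder of Φ at a ∈ ℝ². -/
open MeasureTheory

/-- Partial derivatives as endomorphisms of Schwartz space. -/
noncomputable def DD (u : ℝ × ℝ) : Module.End ℝ (SchwartzMap (ℝ × ℝ) ℝ) :=
  (LineDeriv.lineDerivOpCLM ℝ (SchwartzMap (ℝ × ℝ) ℝ) u).toLinearMap

lemma DD_apply (u : ℝ × ℝ) (f : SchwartzMap (ℝ × ℝ) ℝ) (x : ℝ × ℝ) :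
    DD u f x = fderiv ℝ f x u := rfl

lemma DD_comm (u v : ℝ × ℝ) : Commute (DD u) (DD v) := by
  ext f x
  have key : ∀ a b : ℝ × ℝ, DD a (DD b f) x = fderiv ℝ (fderiv ℝ f) x a b := by
    intro a b
    rw [DD_apply]
    have h1 : (⇑(DD b f)) = fun y => fderiv ℝ f y b := by
      ext y; exact DD_apply b f y
    have hd : DifferentiableAt ℝ (fderiv ℝ f) x :=
      ((f.smooth 2).fderiv_right (m := 1) (by norm_num)).differentiable (by norm_num) x
    rw [h1, fderiv_clm_apply hd (by fun_prop)]
    simp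
  change DD u (DD v f) x = DD v (DD u f) x
  rw [key, key]
  have : IsSymmSndFDerivAt ℝ f x :=
    ((f.smooth 2).contDiffAt).isSymmSndFDerivAt (by simp)
  exact this u v

lemma DD_decomp (u : ℝ × ℝ) : DD u = u.1 • DD (1, 0) + u.2 • DD (0, 1) := by
  ext f x
  have : u = u.1 • ((1 : ℝ), (0 : ℝ)) + u.2 • ((0 : ℝ), (1 : ℝ)) := by ext <;> simp
  change fderiv ℝ f x u = u.1 • fderiv ℝ f x (1, 0) + u.2 • fderiv ℝ f x (0, 1)
  conv_lhs => rw [this]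
  rw [map_add, map_smul, map_smul]

lemma pd1_eq (f : SchwartzMap (ℝ × ℝ) ℝ) : pd1 f = ⇑(DD (1, 0) f) := by
  ext x
  rw [DD_apply]
  have h1 : HasFDerivAt f (fderiv ℝ f x) ((fun t : ℝ => (t, x.2)) x.1) :=
    (f.differentiable x).hasFDerivAt
  have h2 : HasDerivAt (fun t : ℝ => (t, x.2)) ((1 : ℝ), (0 : ℝ)) x.1 :=
    (hasDerivAt_id x.1).prodMk (hasDerivAt_const x.1 x.2)
  exact (h1.comp_hasDerivAt x.1 h2).deriv

lemma pd2_eq (f : SchwartzMap (ℝ × ℝ) ℝ) : pd2 f = ⇑(DD (0, 1) f) := by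
  ext x
  rw [DD_apply]
  have h1 : HasFDerivAt f (fderiv ℝ f x) ((fun t : ℝ => (x.1, t)) x.2) :=
    (f.differentiable x).hasFDerivAt
  have h2 : HasDerivAt (fun t : ℝ => (x.1, t)) ((0 : ℝ), (1 : ℝ)) x.2 :=
    (hasDerivAt_const x.2 x.1).prodMk (hasDerivAt_id x.2)
  exact (h1.comp_hasDerivAt x.2 h2).deriv

lemma pdm_eq (a b : ℕ) (f : SchwartzMap (ℝ × ℝ) ℝ) :
    pdm a b f = ⇑((DD (1, 0) ^ a * DD (0, 1) ^ b) f) := by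
  have h2 : pd2^[b] f = ⇑((DD (0, 1) ^ b) f) := by
    induction b with
    | zero => rfl
    | succ n ih =>
      rw [Function.iterate_succ_apply', ih, pd2_eq, pow_succ']
      rfl
  unfold pdm
  rw [h2]
  induction a with
  | zero => simp
  | succ n ih =>
    rw [Function.iterate_succ_apply', ih, pd1_eq, pow_succ', mul_assoc]
    rfl

/-- Evaluation at a point, as a linear map. -/
noncomputable def evL (x : ℝ × ℝ) : SchwartzMap (ℝ × ℝ) ℝ →ₗ[ℝ] ℝ where
  toFun f := f x
  map_add' _ _ := rfl
  map_smul' _ _ := rfl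

lemma DD_pow (u : ℝ × ℝ) (n : ℕ) (f : SchwartzMap (ℝ × ℝ) ℝ) (x : ℝ × ℝ) :
    (DD u ^ n) f x = ∑ m ∈ Finset.range (n + 1),
      (n.factorial : ℝ) * (u.1 ^ (n - m) * u.2 ^ m / ((n - m).factorial * m.factorial) *
        pdm (n - m) m f x) := by
  have hc : Commute (u.2 • DD (0, 1)) (u.1 • DD (1, 0)) :=
    ((DD_comm (0, 1) (1, 0)).smul_left _).smul_right _
  rw [DD_decomp, add_comm, hc.add_pow]
  change evL x _ = _
  rw [LinearMap.sum_apply, map_sum]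
  refine Finset.sum_congr rfl fun m hm => ?_
  have hm' : m ≤ n := by simpa [Nat.lt_succ_iff] using hm
  have hE : (u.2 • DD (0, 1)) ^ m * (u.1 • DD (1, 0)) ^ (n - m) * ((n.choose m : ℕ) : Module.End ℝ (SchwartzMap (ℝ × ℝ) ℝ))
     = ((n.choose m : ℝ) * (u.1 ^ (n - m) * u.2 ^ m)) • (DD (1, 0) ^ (n - m) * DD (0, 1) ^ m) := by
    rw [smul_pow, smul_pow, smul_mul_smul_comm, ((DD_comm (1, 0) (0, 1)).pow_pow (n - m) m).eq,
      ← nsmul_eq_mul', ← Nat.cast_smul_eq_nsmul ℝ, smul_smul]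
    congr 1; ring
  rw [hE, LinearMap.smul_apply, map_smul, pdm_eq, Nat.cast_choose ℝ hm', smul_eq_mul]
  change _ * evL x _ = _ * (_ * evL x _)
  have := Nat.factorial_pos m
  have := Nat.factorial_pos (n - m)
  field_simp

lemma line_hasDerivAt (f : SchwartzMap (ℝ × ℝ) ℝ) (a u : ℝ × ℝ) (t : ℝ) :
    HasDerivAt (fun t : ℝ => f (a + t • u)) (DD u f (a + t • u)) t := by
  have h1 : HasFDerivAt f (fderiv ℝ f (a + t • u)) ((fun t : ℝ => a + t • u) t) :=
    (f.differentiable _).hasFDerivAt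
  have h2 : HasDerivAt (fun t : ℝ => a + t • u) u t := by
    simpa using ((hasDerivAt_id t).smul_const u).const_add a
  exact h1.comp_hasDerivAt t h2

lemma sum_iteratedDeriv {ι : Type*} (S : Finset ι) (c : ι → ℝ) (a : ι → ℝ × ℝ) (u : ℝ × ℝ)
    (f : SchwartzMap (ℝ × ℝ) ℝ) (n : ℕ) :
    iteratedDeriv n (fun t : ℝ => ∑ i ∈ S, c i * f (a i + t • u)) =
      fun t => ∑ i ∈ S, c i * (DD u ^ n) f (a i + t • u) := by
  induction n with
  | zero => ext t; simp
  | succ n ih =>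
    rw [iteratedDeriv_succ, ih]
    ext t
    rw [pow_succ']
    exact (HasDerivAt.fun_sum fun i _ => (line_hasDerivAt ((DD u ^ n) f) (a i) u t).const_mul (c i)).deriv

lemma taylor_sum {ι : Type*} (S : Finset ι) (c : ι → ℝ) (a : ι → ℝ × ℝ) (u : ℝ × ℝ)
    (f : SchwartzMap (ℝ × ℝ) ℝ) (r : ℕ) :
    ∃ t : ℝ, ∑ i ∈ S, c i * taylorRem2 r f (a i) u =
      ∑ m ∈ Finset.range (r + 2),
       u.1 ^ (r + 1 - m) * u.2 ^ m / ((r + 1 - m).factorial * m.factorial) *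
        ∑ i ∈ S, c i * pdm (r + 1 - m) m f (a i + t • u) := by
  set g : ℝ → ℝ := fun t : ℝ => ∑ i ∈ S, c i * f (a i + t • u) with hg
  have hsm : ∀ n : ℕ, ContDiff ℝ n g := by
    intro n
    apply ContDiff.sum
    intro i _
    have h1 : ContDiff ℝ n (fun t : ℝ => a i + t • u) := by fun_prop
    have h2 : ContDiff ℝ n f := f.smooth n
    exact contDiff_const.mul (h2.comp h1)
  have hw : ∀ n : ℕ, ∀ t ∈ Set.uIcc (0 : ℝ) 1, iteratedDerivWithin n g (Set.uIcc 0 1) t =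
      ∑ i ∈ S, c i * (DD u ^ n) f (a i + t • u) := by
    intro n t ht
    rw [iteratedDerivWithin_eq_iteratedDeriv
      (by rw [Set.uIcc_of_le zero_le_one]; exact uniqueDiffOn_Icc zero_lt_one)
      (hsm n).contDiffAt ht, hg, sum_iteratedDeriv]
  obtain ⟨t, ht, h⟩ := taylor_mean_remainder_lagrange (f := g) (x := 1) (x₀ := 0) (n := r)
    zero_ne_one (hsm r).contDiffOn (by
      have : DifferentiableOn ℝ (fun t : ℝ => ∑ i ∈ S, c i * (DD u ^ r) f (a i + t • u))
          (Set.uIoo 0 1) := by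
        intro t _
        exact (HasDerivAt.fun_sum fun i _ => (line_hasDerivAt ((DD u ^ r) f) (a i) u t).const_mul
          (c i)).differentiableAt.differentiableWithinAt
      exact this.congr fun t ht => hw r t (Set.uIoo_subset_uIcc_self ht))
  refine ⟨t, ?_⟩
  rw [hw _ t (Set.uIoo_subset_uIcc_self ht), taylor_within_apply] at h
  have h2 : ∑ i ∈ S, c i * taylorRem2 r f (a i) u = g 1 -
      ∑ k ∈ Finset.range (r + 1), (((k.factorial : ℝ))⁻¹ * (1 - 0) ^ k) •
        iteratedDerivWithin k g (Set.uIcc 0 1) 0 := by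
    simp only [hw _ 0 Set.left_mem_uIcc]
    simp only [hg, taylorRem2, mul_sub, Finset.sum_sub_distrib]
    congr 1
    · simp
    · simp only [Finset.mul_sum, Finset.smul_sum]
      rw [Finset.sum_comm]
      refine Finset.sum_congr rfl fun k _ => Finset.sum_congr rfl fun i _ => ?_
      rw [DD_pow, ← Finset.mul_sum, ← Finset.mul_sum]
      have := Nat.factorial_pos k
      simp only [zero_smul, add_zero, smul_eq_mul]
      field_simp
      simp
  rw [h2, h]
  simp only [DD_pow]
  simp only [← Finset.mul_sum, sub_zero, one_pow, mul_one]
  rw [Finset.sum_div]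
  simp only [Finset.mul_sum, Finset.sum_div]
  rw [Finset.sum_comm]
  refine Finset.sum_congr rfl fun k _ => Finset.sum_congr rfl fun i _ => ?_
  have := Nat.factorial_pos (r + 1)
  field_simp

lemma sum_recip_le (lam : ℝ) (hl : 1 ≤ lam) (y : ℝ) (N : ℕ) :
    ∑ n ∈ Finset.range N, (1 + (y - n / lam) ^ 2)⁻¹ ≤ 3 * Real.pi * lam := by
  have hl0 : 0 < lam := by linarith
  have step : ∀ n : ℕ, (1 + (y - n / lam) ^ 2)⁻¹ ≤
      3 * lam * (Real.arctan (((n + 1 : ℕ) : ℝ) / lam - y) - Real.arctan ((n : ℝ) / lam - y)) := by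
    intro n
    have hlt : (n : ℝ) / lam - y < ((n + 1 : ℕ) : ℝ) / lam - y := by
      push_cast; gcongr; linarith
    obtain ⟨c, hc, h⟩ := exists_hasDerivAt_eq_slope Real.arctan (fun x => 1 / (1 + x ^ 2)) hlt
      Real.continuous_arctan.continuousOn (fun x _ => Real.hasDerivAt_arctan x)
    have hd : ((n + 1 : ℕ) : ℝ) / lam - y - ((n : ℝ) / lam - y) = 1 / lam := by
      push_cast; ring
    have hle : 1 / lam ≤ 1 := by rw [div_le_one hl0]; exact hl
    rw [hd] at h
    have h' : Real.arctan (((n + 1 : ℕ) : ℝ) / lam - y) - Real.arctan ((n : ℝ) / lam - y)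
        = 1 / (1 + c ^ 2) * (1 / lam) := by
      rw [h]; field_simp
    rw [h']
    have e : 3 * lam * (1 / (1 + c ^ 2) * (1 / lam)) = 3 / (1 + c ^ 2) := by
      field_simp
    rw [e, inv_eq_one_div, div_le_div_iff₀ (by positivity) (by positivity)]
    set b := (n : ℝ) / lam - y with hb
    have hb2 : (y - n / lam) ^ 2 = b ^ 2 := by rw [hb]; ring
    rw [hb2]
    have h1 : 0 ≤ c - b := by linarith [hc.1]
    have h2 : c - b ≤ 1 := by linarith [hc.2]
    nlinarith [sq_nonneg (c - 2 * b), mul_nonneg h1 (sub_nonneg.2 h2)]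
  calc _ ≤ ∑ n ∈ Finset.range N, 3 * lam * (Real.arctan (((n + 1 : ℕ) : ℝ) / lam - y) -
            Real.arctan ((n : ℝ) / lam - y)) := Finset.sum_le_sum fun n _ => step n
    _ = 3 * lam * (Real.arctan ((N : ℝ) / lam - y) - Real.arctan (((0 : ℕ) : ℝ) / lam - y)) := by
        rw [← Finset.mul_sum, Finset.sum_range_sub (fun n : ℕ => Real.arctan ((n : ℝ) / lam - y))]
    _ ≤ 3 * lam * Real.pi := by
        gcongr
        have := Real.arctan_lt_pi_div_two ((N : ℝ) / lam - y)
        have := Real.neg_pi_div_two_lt_arctan (((0 : ℕ) : ℝ) / lam - y)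
        linarith
    _ = _ := by ring

lemma schwartz_decay (f : SchwartzMap (ℝ × ℝ) ℝ) :
    ∃ M : ℝ, 0 ≤ M ∧ ∀ z : ℝ × ℝ, |f z| ≤ M * ((1 + z.1 ^ 2)⁻¹ * (1 + z.2 ^ 2)⁻¹) := by
  refine ⟨2 ^ 4 * (Finset.Iic ((4, 0) : ℕ × ℕ)).sup
    (fun m => SchwartzMap.seminorm ℝ m.1 m.2) f, by positivity, fun z => ?_⟩
  have h := SchwartzMap.one_add_le_sup_seminorm_apply (𝕜 := ℝ) (m := (4, 0)) (k := 4) (n := 0)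
    le_rfl le_rfl f z
  rw [norm_iteratedFDeriv_zero, Real.norm_eq_abs] at h
  refine le_trans ?_ (mul_le_mul_of_nonneg_right h (by positivity))
  have h1 : 1 + z.1 ^ 2 ≤ (1 + ‖z‖) ^ 2 := by
    have : |z.1| ≤ ‖z‖ := norm_fst_le z
    have := sq_abs z.1
    nlinarith [abs_nonneg z.1]
  have h2 : 1 + z.2 ^ 2 ≤ (1 + ‖z‖) ^ 2 := by
    have : |z.2| ≤ ‖z‖ := norm_snd_le z
    have := sq_abs z.2
    nlinarith [abs_nonneg z.2]
  have h3 : (1 + z.1 ^ 2) * (1 + z.2 ^ 2) ≤ (1 + ‖z‖) ^ 4 := by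
    calc _ ≤ (1 + ‖z‖) ^ 2 * (1 + ‖z‖) ^ 2 := by gcongr
      _ = _ := by ring
  rw [← mul_inv, ← div_eq_mul_inv, le_div_iff₀ (by positivity), mul_comm]
  gcongr

lemma sum_schwartz_le (f : SchwartzMap (ℝ × ℝ) ℝ) :
    ∃ M : ℝ, 0 ≤ M ∧ ∀ (lam : ℝ), 1 ≤ lam → ∀ (y : ℝ × ℝ) (S : Finset (ℕ × ℕ)),
      ∑ n ∈ S, |f (y.1 - n.1 / lam, y.2 - n.2 / lam)| ≤ M * lam ^ 2 := by
  obtain ⟨M, hM, h⟩ := schwartz_decay f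
  refine ⟨M * (3 * Real.pi) ^ 2, by positivity, fun lam hl y S => ?_⟩
  have hl0 : 0 < lam := by linarith
  obtain ⟨N, hN⟩ : ∃ N : ℕ, S ⊆ Finset.range N ×ˢ Finset.range N := by
    refine ⟨S.sup (fun n => n.1 + n.2 + 1), fun n hn => ?_⟩
    have : n.1 + n.2 + 1 ≤ _ := Finset.le_sup (f := fun n : ℕ × ℕ => n.1 + n.2 + 1) hn
    simp only [Finset.mem_product, Finset.mem_range]
    omega
  calc _ ≤ ∑ n ∈ S, M * ((1 + (y.1 - n.1 / lam) ^ 2)⁻¹ * (1 + (y.2 - n.2 / lam) ^ 2)⁻¹) :=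
        Finset.sum_le_sum fun n _ => h _
    _ ≤ ∑ n ∈ Finset.range N ×ˢ Finset.range N,
        M * ((1 + (y.1 - n.1 / lam) ^ 2)⁻¹ * (1 + (y.2 - n.2 / lam) ^ 2)⁻¹) :=
        Finset.sum_le_sum_of_subset_of_nonneg hN fun _ _ _ => by positivity
    _ = M * ((∑ n ∈ Finset.range N, (1 + (y.1 - n / lam) ^ 2)⁻¹) *
          ∑ n ∈ Finset.range N, (1 + (y.2 - n / lam) ^ 2)⁻¹) := by
        rw [← Finset.mul_sum, Finset.sum_mul_sum, Finset.sum_product]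
    _ ≤ M * ((3 * Real.pi * lam) * (3 * Real.pi * lam)) := by
        have h1 := sum_recip_le lam hl y.1 N
        have h2 := sum_recip_le lam hl y.2 N
        have : 0 ≤ ∑ n ∈ Finset.range N, (1 + (y.2 - n / lam) ^ 2)⁻¹ :=
          Finset.sum_nonneg fun _ _ => by positivity
        gcongr
    _ = _ := by ring

lemma rem_sum_le (r : ℕ) (f : SchwartzMap (ℝ × ℝ) ℝ) :
    ∃ C : ℝ, 0 ≤ C ∧ ∀ (v : ℕ × ℕ → ℝ) (V : ℝ), (∀ n, |v n| ≤ V) → ∀ lam : ℝ, 1 ≤ lam →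
      ∀ (x u : ℝ × ℝ) (S : Finset (ℕ × ℕ)),
      |∑ n ∈ S, v n * taylorRem2 r f (x.1 - n.1 / lam, x.2 - n.2 / lam) u| ≤
        C * V * lam ^ 2 * ∑ m ∈ Finset.range (r + 2),
          |u.1| ^ (r + 1 - m) * |u.2| ^ m / ((r + 1 - m).factorial * m.factorial) := by
  choose M hM0 hM using fun m : ℕ => sum_schwartz_le ((DD (1, 0) ^ (r + 1 - m) * DD (0, 1) ^ m) f)
  refine ⟨∑ m ∈ Finset.range (r + 2), M m, Finset.sum_nonneg fun m _ => hM0 m, ?_⟩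
  intro v V hv lam hl x u S
  have hV : 0 ≤ V := (abs_nonneg _).trans (hv (0, 0))
  obtain ⟨t, ht⟩ := taylor_sum S v (fun n => (x.1 - n.1 / lam, x.2 - n.2 / lam)) u f r
  rw [ht, Finset.mul_sum]
  refine (Finset.abs_sum_le_sum_abs _ _).trans (Finset.sum_le_sum fun m hm => ?_)
  rw [abs_mul, abs_div, abs_mul, abs_pow, abs_pow,
    abs_of_nonneg (by positivity : (0 : ℝ) ≤ ((r + 1 - m).factorial : ℝ) * m.factorial), mul_comm]
  refine mul_le_mul_of_nonneg_right ?_ (by positivity)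
  calc _ ≤ ∑ n ∈ S, V * |((DD (1, 0) ^ (r + 1 - m) * DD (0, 1) ^ m) f)
            ((x + t • u).1 - n.1 / lam, (x + t • u).2 - n.2 / lam)| := by
        refine (Finset.abs_sum_le_sum_abs _ _).trans (Finset.sum_le_sum fun n _ => ?_)
        rw [abs_mul, pdm_eq]
        have : (x.1 - n.1 / lam, x.2 - n.2 / lam) + t • u =
            ((x + t • u).1 - n.1 / lam, (x + t • u).2 - n.2 / lam) := by
          ext <;> simp <;> ring
        rw [this]
        exact mul_le_mul_of_nonneg_right (hv n) (abs_nonneg _)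
    _ ≤ V * (M m * lam ^ 2) := by
        rw [← Finset.mul_sum]
        exact mul_le_mul_of_nonneg_left (hM m lam hl _ S) hV
    _ ≤ V * ((∑ m ∈ Finset.range (r + 2), M m) * lam ^ 2) := by
        gcongr
        exact Finset.single_le_sum (fun i _ => hM0 i) hm
    _ = _ := by ring

lemma abs_tsum_le_of_sums {ι : Type*} (f : ι → ℝ) (B : ℝ)
    (h : ∀ S : Finset ι, |∑ n ∈ S, f n| ≤ B) : |∑' n, f n| ≤ B := by
  by_cases hs : Summable f
  · exact le_of_tendsto hs.hasSum.abs (Filter.Eventually.of_forall h)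
  · rw [tsum_eq_zero_of_not_summable hs]
    simpa using h ∅

/-- Bound on the combined Taylor remainder term in the two-dimensional weighted `r`-th
order ΣΔ error analysis: there is a constant `C ≥ 0` depending only on `Φ` and `r` such
that the remainder series is bounded by
`C V λ^{−(r+1)} (max_{i,j} Σ_k |h^{i,j}_k| k^{r+1}) (Σ_{i,j} w_{i,j} Σ_m |i|^{r+1−m}|j|^m/((r+1−m)! m!))`. -/
theorem stmt_15 (r : ℕ) (hr : 1 ≤ r) (Φ : SchwartzMap (ℝ × ℝ) ℝ) :
    ∃ C : ℝ, 0 ≤ C ∧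
      ∀ (p s ℓ L : ℕ) (w : ℤ → ℤ → ℝ), (∀ i j : ℤ, 0 ≤ w i j) →
        (∑ i ∈ Finset.Icc (0 : ℤ) (p : ℤ), ∑ j ∈ Finset.Icc (-(s : ℤ)) (ℓ : ℤ), w i j = 1) →
      ∀ h : ℤ → ℤ → ℤ → ℝ, (∀ i j k : ℤ, k ≤ 0 → h i j k = 0) →
        (∀ i j k : ℤ, (L : ℤ) < k → h i j k = 0) →
      ∀ (v : ℕ × ℕ → ℝ) (V : ℝ), (∀ n : ℕ × ℕ, |v n| ≤ V) →
      ∀ lam : ℝ, 1 ≤ lam → ∀ x : ℝ × ℝ,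
        |(lam ^ 2)⁻¹ * ∑' n : ℕ × ℕ, v n *
            ∑ i ∈ Finset.Icc (0 : ℤ) (p : ℤ), ∑ j ∈ Finset.Icc (-(s : ℤ)) (ℓ : ℤ),
              w i j * ∑ k ∈ Finset.Icc (1 : ℤ) (L : ℤ),
                h i j k * taylorRem2 r (⇑Φ) (x.1 - n.1 / lam, x.2 - n.2 / lam)
                  (-(((k : ℝ) / lam) • ((i : ℝ), (j : ℝ))))|
          ≤ C * V * (lam ^ (r + 1))⁻¹ *
              ((Finset.Icc (0 : ℤ) (p : ℤ) ×ˢ Finset.Icc (-(s : ℤ)) (ℓ : ℤ)).sup'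
                (Finset.nonempty_product.mpr
                  ⟨Finset.nonempty_Icc.mpr (by omega), Finset.nonempty_Icc.mpr (by omega)⟩)
                (fun ij => ∑ k ∈ Finset.Icc (1 : ℤ) (L : ℤ),
                  |h ij.1 ij.2 k| * (k : ℝ) ^ (r + 1))) *
              (∑ i ∈ Finset.Icc (0 : ℤ) (p : ℤ), ∑ j ∈ Finset.Icc (-(s : ℤ)) (ℓ : ℤ),
                w i j * ∑ m ∈ Finset.range (r + 2),
                  |(i : ℝ)| ^ (r + 1 - m) * |(j : ℝ)| ^ m /
                    ((r + 1 - m).factorial * m.factorial)) := by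
  obtain ⟨C, hC, key⟩ := rem_sum_le r Φ
  refine ⟨C, hC, ?_⟩
  intro p s ℓ L w hw _ h _ _ v V hv lam hl x
  have hl0 : 0 < lam := by linarith
  have hV : 0 ≤ V := (abs_nonneg _).trans (hv (0, 0))
  set I := Finset.Icc (0 : ℤ) (p : ℤ) with hI
  set J := Finset.Icc (-(s : ℤ)) (ℓ : ℤ) with hJ
  set K := Finset.Icc (1 : ℤ) (L : ℤ) with hK
  set H := (I ×ˢ J).sup' (Finset.nonempty_product.mpr
                  ⟨Finset.nonempty_Icc.mpr (by omega), Finset.nonempty_Icc.mpr (by omega)⟩)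
                (fun ij => ∑ k ∈ K, |h ij.1 ij.2 k| * (k : ℝ) ^ (r + 1)) with hH
  set P : ℤ → ℤ → ℝ := fun i j => ∑ m ∈ Finset.range (r + 2),
                  |(i : ℝ)| ^ (r + 1 - m) * |(j : ℝ)| ^ m /
                    ((r + 1 - m).factorial * m.factorial) with hP
  have hPnn : ∀ i j, 0 ≤ P i j := fun i j => Finset.sum_nonneg fun m _ => by positivity
  have hsup : ∀ i ∈ I, ∀ j ∈ J, ∑ k ∈ K, |h i j k| * (k : ℝ) ^ (r + 1) ≤ H := by
    intro i hi j hj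
    exact Finset.le_sup' (fun ij : ℤ × ℤ => ∑ k ∈ K, |h ij.1 ij.2 k| * (k : ℝ) ^ (r + 1))
      (Finset.mem_product.2 ⟨hi, hj⟩ : (i, j) ∈ I ×ˢ J)
  have hmain : ∀ S : Finset (ℕ × ℕ), |∑ n ∈ S, v n * ∑ i ∈ I, ∑ j ∈ J, w i j * ∑ k ∈ K,
      h i j k * taylorRem2 r (⇑Φ) (x.1 - n.1 / lam, x.2 - n.2 / lam)
                  (-(((k : ℝ) / lam) • ((i : ℝ), (j : ℝ))))| ≤
      lam ^ 2 * (C * V * (lam ^ (r + 1))⁻¹ * H * ∑ i ∈ I, ∑ j ∈ J, w i j * P i j) := by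
    intro S
    have e : ∑ n ∈ S, v n * ∑ i ∈ I, ∑ j ∈ J, w i j * ∑ k ∈ K,
      h i j k * taylorRem2 r (⇑Φ) (x.1 - n.1 / lam, x.2 - n.2 / lam)
                  (-(((k : ℝ) / lam) • ((i : ℝ), (j : ℝ)))) =
        ∑ i ∈ I, ∑ j ∈ J, w i j * ∑ k ∈ K, h i j k * ∑ n ∈ S, v n *
          taylorRem2 r (⇑Φ) (x.1 - n.1 / lam, x.2 - n.2 / lam)
                  (-(((k : ℝ) / lam) • ((i : ℝ), (j : ℝ)))) := by
      simp only [Finset.mul_sum]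
      rw [Finset.sum_comm]
      refine Finset.sum_congr rfl fun i _ => ?_
      rw [Finset.sum_comm]
      refine Finset.sum_congr rfl fun j _ => ?_
      rw [Finset.sum_comm]
      refine Finset.sum_congr rfl fun k _ => Finset.sum_congr rfl fun n _ => ?_
      ring
    rw [e, Finset.mul_sum, Finset.mul_sum]
    refine (Finset.abs_sum_le_sum_abs _ _).trans (Finset.sum_le_sum fun i hi => ?_)
    rw [Finset.mul_sum, Finset.mul_sum]
    refine (Finset.abs_sum_le_sum_abs _ _).trans (Finset.sum_le_sum fun j hj => ?_)
    rw [abs_mul, abs_of_nonneg (hw i j)]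
    have hk : ∀ k ∈ K, |h i j k * ∑ n ∈ S, v n *
          taylorRem2 r (⇑Φ) (x.1 - n.1 / lam, x.2 - n.2 / lam)
                  (-(((k : ℝ) / lam) • ((i : ℝ), (j : ℝ))))| ≤
        |h i j k| * (k : ℝ) ^ (r + 1) * (C * V * lam ^ 2 * (lam ^ (r + 1))⁻¹ * P i j) := by
      intro k hk
      have hk0 : (0 : ℝ) ≤ k := by
        have : (1 : ℤ) ≤ k := (Finset.mem_Icc.1 hk).1
        exact_mod_cast (by omega : (0 : ℤ) ≤ k)
      rw [abs_mul, mul_assoc]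
      refine mul_le_mul_of_nonneg_left ?_ (abs_nonneg _)
      refine (key v V hv lam hl x _ S).trans (le_of_eq ?_)
      have : ∑ m ∈ Finset.range (r + 2),
          |(-(((k : ℝ) / lam) • ((i : ℝ), (j : ℝ)))).1| ^ (r + 1 - m) *
            |(-(((k : ℝ) / lam) • ((i : ℝ), (j : ℝ)))).2| ^ m /
              ((r + 1 - m).factorial * m.factorial) = ((k : ℝ) / lam) ^ (r + 1) * P i j := by
        rw [hP, Finset.mul_sum]
        refine Finset.sum_congr rfl fun m hm => ?_
        have hm' : m ≤ r + 1 := by have := Finset.mem_range.1 hm; omega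
        have hp : ((k : ℝ) / lam) ^ (r + 1) = (k / lam) ^ (r + 1 - m) * (k / lam) ^ m := by
          rw [← pow_add]; congr 1; omega
        simp only [Prod.smul_mk, Prod.neg_mk, smul_eq_mul, abs_neg, abs_mul,
          abs_of_nonneg (div_nonneg hk0 hl0.le), mul_pow]
        rw [hp]
        ring
      rw [this, div_pow]
      ring
    calc _ ≤ w i j * ∑ k ∈ K, |h i j k| * (k : ℝ) ^ (r + 1) *
            (C * V * lam ^ 2 * (lam ^ (r + 1))⁻¹ * P i j) :=
          mul_le_mul_of_nonneg_left
            ((Finset.abs_sum_le_sum_abs _ _).trans (Finset.sum_le_sum hk)) (hw i j)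
      _ ≤ w i j * (H * (C * V * lam ^ 2 * (lam ^ (r + 1))⁻¹ * P i j)) := by
          rw [← Finset.sum_mul]
          have := hPnn i j
          exact mul_le_mul_of_nonneg_left
            (mul_le_mul_of_nonneg_right (hsup i hi j hj) (by positivity)) (hw i j)
      _ = _ := by ring
  have ht := abs_tsum_le_of_sums _ _ hmain
  rw [abs_mul, abs_of_nonneg (by positivity : (0 : ℝ) ≤ (lam ^ 2)⁻¹)]
  refine (mul_le_mul_of_nonneg_left ht (by positivity)).trans (le_of_eq ?_)
  rw [← mul_assoc, inv_mul_cancel₀ (by positivity), one_mul]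
end

section
/- Let p, s, ℓ ∈ ℕ with p ≥ 1 and ℓ ≥ 1, and consider weights w = (w_{i,j}), i ∈ {0,…,p}, j ∈ {−s,…,ℓ}, satisfying w_{i,j} ≥ 0 for all i,j, Σ_{i,j} w_{i,j} = 1, and w_{0,j} = 0 for all j ≤ 0. Define F(w) = ( Σ_{i,j} j·w_{i,j} )² + ( Σ_{i,j} i·w_{i,j} )². Then F(w) ≥ 1/(1+(s+1)²) for every such w, and equality holds for the weights given by w_{1,−s} = (s+1)/(1+(s+1)²), w_{0,1} = 1 − (s+1)/(1+(s+1)²), and w_{i,j} = 0 otherwise. In particular, the minimal value of the weight constant C_W = F(w)^{1/2} over all admissible weight matrices equals 1/√(1+(s+1)²). -/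
open Finset

/-- The objective `F(w) = (Σ_{i,j} j w_{i,j})² + (Σ_{i,j} i w_{i,j})²` of the
optimization problem for first-order weighted ΣΔ schemes. -/
noncomputable def Fobj (p s ℓ : ℕ) (w : ℤ → ℤ → ℝ) : ℝ :=
  (∑ i ∈ Icc (0 : ℤ) (p : ℤ), ∑ j ∈ Icc (-(s : ℤ)) (ℓ : ℤ), (j : ℝ) * w i j) ^ 2
    + (∑ i ∈ Icc (0 : ℤ) (p : ℤ), ∑ j ∈ Icc (-(s : ℤ)) (ℓ : ℤ), (i : ℝ) * w i j) ^ 2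

/-- Admissible weight matrices: nonnegative entries summing to one, vanishing for
`i = 0`, `j ≤ 0`. -/
def AdmissibleW (p s ℓ : ℕ) (w : ℤ → ℤ → ℝ) : Prop :=
  (∀ i j : ℤ, 0 ≤ w i j) ∧
    (∑ i ∈ Icc (0 : ℤ) (p : ℤ), ∑ j ∈ Icc (-(s : ℤ)) (ℓ : ℤ), w i j = 1) ∧
    (∀ j : ℤ, j ≤ 0 → w 0 j = 0)

/-- The optimal weights: `w_{1,−s} = (s+1)/(1+(s+1)²)`, `w_{0,1} = 1 − (s+1)/(1+(s+1)²)`,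
all other entries zero. -/
noncomputable def wOpt (s : ℕ) : ℤ → ℤ → ℝ := fun i j =>
  if (i, j) = ((1 : ℤ), -(s : ℤ)) then ((s : ℝ) + 1) / (1 + ((s : ℝ) + 1) ^ 2)
  else if (i, j) = ((0 : ℤ), (1 : ℤ)) then 1 - ((s : ℝ) + 1) / (1 + ((s : ℝ) + 1) ^ 2)
  else 0

lemma lower_aux (p s ℓ : ℕ) (w : ℤ → ℤ → ℝ) (h : AdmissibleW p s ℓ w) :
    1 / (1 + ((s : ℝ) + 1) ^ 2) ≤ Fobj p s ℓ w := by
  obtain ⟨h0, h1, h2⟩ := h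
  unfold Fobj
  set X := ∑ i ∈ Icc (0 : ℤ) (p : ℤ), ∑ j ∈ Icc (-(s : ℤ)) (ℓ : ℤ), (j : ℝ) * w i j with hX
  set Y := ∑ i ∈ Icc (0 : ℤ) (p : ℤ), ∑ j ∈ Icc (-(s : ℤ)) (ℓ : ℤ), (i : ℝ) * w i j with hY
  have key : 1 ≤ X + ((s : ℝ) + 1) * Y := by
    refine h1.symm.le.trans ?_
    rw [hX, hY, Finset.mul_sum, ← Finset.sum_add_distrib]
    refine Finset.sum_le_sum fun i hi => ?_
    rw [Finset.mul_sum, ← Finset.sum_add_distrib]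
    refine Finset.sum_le_sum fun j hj => ?_
    rw [Finset.mem_Icc] at hi hj
    have hw := h0 i j
    by_cases hc : i = 0 ∧ j ≤ 0
    · obtain ⟨rfl, hc⟩ := hc
      simp [h2 j hc]
    · have hz : (1 : ℤ) ≤ j + (s + 1) * i := by
        rcases eq_or_lt_of_le hi.1 with h | h
        · subst h
          simp at hc ⊢
          omega
        · nlinarith [mul_le_mul_of_nonneg_left (show (1 : ℤ) ≤ i by omega)
            (show (0 : ℤ) ≤ s + 1 by omega)]
      have hr : (1 : ℝ) ≤ j + (s + 1) * i := by exact_mod_cast hz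
      nlinarith [mul_le_mul_of_nonneg_right hr hw]
  rw [div_le_iff₀ (by positivity)]
  nlinarith [sq_nonneg (Y - ((s : ℝ) + 1) * X)]

lemma sum_aux (p s ℓ : ℕ) (hp : 1 ≤ p) (hℓ : 1 ≤ ℓ) (f : ℤ → ℤ → ℝ) :
    ∑ i ∈ Icc (0 : ℤ) (p : ℤ), ∑ j ∈ Icc (-(s : ℤ)) (ℓ : ℤ), f i j * wOpt s i j
      = f 1 (-(s : ℤ)) * (((s : ℝ) + 1) / (1 + ((s : ℝ) + 1) ^ 2))
        + f 0 1 * (1 - ((s : ℝ) + 1) / (1 + ((s : ℝ) + 1) ^ 2)) := by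
  rw [← Finset.sum_product', Finset.sum_eq_add ((1 : ℤ), -(s : ℤ)) ((0 : ℤ), (1 : ℤ))]
  · simp [wOpt]
  · simp
  · rintro ⟨i, j⟩ _ ⟨ha, hb⟩
    simp only [wOpt, if_neg ha, if_neg hb, mul_zero]
  · intro h
    exact absurd (by simp only [Finset.mem_product, Finset.mem_Icc]; omega) h
  · intro h
    exact absurd (by simp only [Finset.mem_product, Finset.mem_Icc]; omega) h

lemma opt_aux (p s ℓ : ℕ) (hp : 1 ≤ p) (hℓ : 1 ≤ ℓ) :
    AdmissibleW p s ℓ (wOpt s) ∧ Fobj p s ℓ (wOpt s) = 1 / (1 + ((s : ℝ) + 1) ^ 2) := by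
  refine ⟨⟨fun i j => ?_, ?_, fun j hj => ?_⟩, ?_⟩
  · unfold wOpt
    split_ifs
    · positivity
    · rw [sub_nonneg, div_le_one (by positivity)]
      nlinarith [sq_nonneg (s : ℝ), (Nat.cast_nonneg s : (0 : ℝ) ≤ s)]
    · exact le_rfl
  · have := sum_aux p s ℓ hp hℓ (fun _ _ => 1)
    simp only [one_mul] at this
    rw [this]
    ring
  · have : j ≠ 1 := by omega
    simp [wOpt, this]
  · unfold Fobj
    rw [sum_aux p s ℓ hp hℓ (fun _ j => (j : ℝ)), sum_aux p s ℓ hp hℓ (fun i _ => (i : ℝ))]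
    push_cast
    have : (1 + ((s : ℝ) + 1) ^ 2) ≠ 0 := by positivity
    field_simp
    ring

/-- Solution of the optimization problem for the first-order weight constant:
`F(w) ≥ 1/(1+(s+1)²)` for every admissible `w`, with equality at `wOpt`; in particular
the minimal value of `C_W = √F(w)` equals `1/√(1+(s+1)²)`. -/
theorem stmt_16 (p s ℓ : ℕ) (hp : 1 ≤ p) (hℓ : 1 ≤ ℓ) :
    (∀ w : ℤ → ℤ → ℝ, AdmissibleW p s ℓ w →
        1 / (1 + ((s : ℝ) + 1) ^ 2) ≤ Fobj p s ℓ w) ∧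
    (AdmissibleW p s ℓ (wOpt s) ∧ Fobj p s ℓ (wOpt s) = 1 / (1 + ((s : ℝ) + 1) ^ 2)) ∧
    IsLeast {c : ℝ | ∃ w : ℤ → ℤ → ℝ, AdmissibleW p s ℓ w ∧ c = Real.sqrt (Fobj p s ℓ w)}
      (1 / Real.sqrt (1 + ((s : ℝ) + 1) ^ 2)) := by
  have ho := opt_aux p s ℓ hp hℓ
  refine ⟨lower_aux p s ℓ, ho, ⟨wOpt s, ho.1, ?_⟩, ?_⟩
  · rw [ho.2, Real.sqrt_div zero_le_one, Real.sqrt_one]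
  · rintro c ⟨w, hw, rfl⟩
    have := Real.sqrt_le_sqrt (lower_aux p s ℓ w hw)
    rwa [Real.sqrt_div zero_le_one, Real.sqrt_one] at this
end
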